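/- arXiv:2505.24271 — 2 statements merged into one kernel-verified Lean document; each statement's English description precedes it below -/
import Mathlib

section
/- For every ε > 0 there exists C_ε > 0 such that, uniformly in dyadic N, N₁, N₂, N₃ ≥ 1 and m ∈ ℤ, the operator norm of the base tensor h^{𝐍,(m)} viewed as a linear map from ℓ²(ℤ²) (variable n₂) to ℓ²((ℤ²)³) (variables (n, n₁, n₃)), i.e. the map sending f to (n, n₁, n₃) ↦ ∑_{n₂} h^{𝐍,(m)}(n, n₁, n₂, n₃) f(n₂), is at most C_ε · min( N (min(N₁, N₃))^ε, (N N₁)^{1/2 + ε}, (N N₃)^{1/2 + ε}, (N₁ N₃)^{1/2 + ε} ). -/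
/-- Euclidean norm of a lattice point in `ℤ²`. -/
noncomputable def znorm (n : ℤ × ℤ) : ℝ := Real.sqrt ((n.1 : ℝ) ^ 2 + (n.2 : ℝ) ^ 2)

/-- Squared Euclidean norm `|n|²` of `n ∈ ℤ²`, as an integer. -/
def nsq (n : ℤ × ℤ) : ℤ := n.1 ^ 2 + n.2 ^ 2

/-- `φ(n̄) = |n|² − |n₁|² + |n₂|² − |n₃|²`. -/
def phiFn (n n₁ n₂ n₃ : ℤ × ℤ) : ℤ := nsq n - nsq n₁ + nsq n₂ - nsq n₃

/-- `N` is a dyadic number: `N = 2^k` for some integer `k ≥ 0`. -/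
def IsDyadic (N : ℝ) : Prop := ∃ k : ℕ, N = 2 ^ k

/-- `|n| ∼ N`: for dyadic `N ≥ 2` this means `N/2 < |n| ≤ N`; for `N = 1` it means `|n| ≤ 1`. -/
def simDyadic (N : ℝ) (n : ℤ × ℤ) : Prop :=
  (N = 1 ∧ znorm n ≤ 1) ∨ (N ≠ 1 ∧ N / 2 < znorm n ∧ znorm n ≤ N)

/-- Membership in the set `S^{𝐍,(m)}`. -/
def SMem (N N₁ N₂ N₃ : ℝ) (m : ℤ) (n n₁ n₂ n₃ : ℤ × ℤ) : Prop :=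
  n = n₁ - n₂ + n₃ ∧ n ≠ n₁ ∧ n ≠ n₃ ∧ phiFn n n₁ n₂ n₃ = m ∧
    simDyadic N n ∧ simDyadic N₁ n₁ ∧ simDyadic N₂ n₂ ∧ simDyadic N₃ n₃ 

-- The base tensor `h^{𝐍,(m)}`: the `{0,1}`-valued indicator of `S^{𝐍,(m)}`.
open Classical in
noncomputable def hten (N N₁ N₂ N₃ : ℝ) (m : ℤ) (n n₁ n₂ n₃ : ℤ × ℤ) : ℝ :=
  if SMem N N₁ N₂ N₃ m n n₁ n₂ n₃ then 1 else 0


lemma divisor_bound (ε : ℝ) (hε : 0 < ε) : ∃ C : ℝ, 1 ≤ C ∧ ∀ n : ℕ, n ≠ 0 →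
    (n.divisors.card : ℝ) ≤ C * (n : ℝ) ^ ε := by
  have hl : 0 < Real.log 2 := Real.log_pos (by norm_num)
  set M : ℝ := 1 + 1 / (ε * Real.log 2) with hM
  have hM1 : 1 ≤ M := by rw [hM]; linarith [show 0 < 1 / (ε * Real.log 2) by positivity]
  obtain ⟨Q, hQ⟩ := exists_nat_ge ((2 : ℝ) ^ (1 / ε))
  refine ⟨M ^ Q, one_le_pow₀ hM1, ?_⟩
  intro n hn
  have key : ∀ p ∈ n.primeFactors, ((n.factorization p + 1 : ℕ) : ℝ) ≤
      (if p < Q then M else 1) * ((p : ℝ) ^ (n.factorization p)) ^ ε := by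
    intro p hp
    have hp2 : 2 ≤ p := (Nat.prime_of_mem_primeFactors hp).two_le
    have hp2' : (2 : ℝ) ≤ p := by exact_mod_cast hp2
    generalize n.factorization p = k
    have e1 : ((p : ℝ) ^ k) ^ ε = ((p : ℝ) ^ ε) ^ k := by
      rw [← Real.rpow_natCast, ← Real.rpow_natCast, ← Real.rpow_mul (by positivity),
        ← Real.rpow_mul (by positivity), mul_comm]
    rw [e1]
    split_ifs with h
    · have e2 : ((2 : ℝ) ^ ε) ^ k ≤ ((p : ℝ) ^ ε) ^ k := by gcongr
      have e3 : 1 + k * (ε * Real.log 2) ≤ ((2 : ℝ) ^ ε) ^ k := by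
        rw [Real.rpow_def_of_pos (by norm_num), ← Real.exp_nat_mul]
        have := Real.add_one_le_exp ((k : ℝ) * (Real.log 2 * ε))
        linarith
      have e4 : M * (1 + k * (ε * Real.log 2)) = 1 + k + 1 / (ε * Real.log 2) +
          k * (ε * Real.log 2) := by
        rw [hM]; field_simp; ring
      have e5 : M * (1 + k * (ε * Real.log 2)) ≤ M * ((p : ℝ) ^ ε) ^ k := by
        gcongr; exact e3.trans e2
      have : 0 < 1 / (ε * Real.log 2) := by positivity
      have : 0 ≤ k * (ε * Real.log 2) := by positivity
      push_cast
      linarith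
    · push Not at h
      have h' : (2 : ℝ) ^ (1 / ε) ≤ p := hQ.trans (by exact_mod_cast h)
      have e2 : (2 : ℝ) ≤ (p : ℝ) ^ ε := by
        calc (2 : ℝ) = ((2 : ℝ) ^ (1 / ε)) ^ ε := by
              rw [← Real.rpow_mul (by norm_num)]; field_simp; simp
          _ ≤ _ := by gcongr
      have e3 : (2 : ℝ) ^ k ≤ ((p : ℝ) ^ ε) ^ k := by gcongr
      have e4 : k + 1 ≤ 2 ^ k := Nat.lt_two_pow_self
      have e5 : ((k + 1 : ℕ) : ℝ) ≤ 2 ^ k := by exact_mod_cast e4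
      linarith
  rw [Nat.card_divisors hn]
  push_cast
  have e : (n : ℝ) ^ ε = ∏ p ∈ n.primeFactors, ((p : ℝ) ^ (n.factorization p)) ^ ε := by
    rw [Real.finsetProd_rpow _ _ (fun i _ => by positivity)]
    congr 1
    have := Nat.prod_factorization_pow_eq_self hn
    conv_lhs => rw [← this]
    rw [Finsupp.prod]; push_cast; rfl
  calc ∏ p ∈ n.primeFactors, ((n.factorization p : ℝ) + 1)
      ≤ ∏ p ∈ n.primeFactors, ((if p < Q then M else 1) * ((p : ℝ) ^ (n.factorization p)) ^ ε) := by
        apply Finset.prod_le_prod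
        · intro i _; positivity
        · intro i hi; exact_mod_cast key i hi
    _ = (∏ p ∈ n.primeFactors, (if p < Q then M else 1)) * (n : ℝ) ^ ε := by
        rw [Finset.prod_mul_distrib, e]
    _ ≤ M ^ Q * (n : ℝ) ^ ε := by
        gcongr
        rw [Finset.prod_ite]
        simp only [Finset.prod_const, one_pow, mul_one]
        apply pow_le_pow_right₀ hM1
        calc _ ≤ (Finset.range Q).card := by
              apply Finset.card_le_card
              intro p hp
              simp at hp ⊢
              exact hp.2
          _ = Q := by simp

/-- primitive representations -/
lemma prim_reps (n : ℕ) (hn : n ≠ 0) (s : Finset (ℤ × ℤ))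
    (hs : ∀ P ∈ s, P.1 ^ 2 + P.2 ^ 2 = (n : ℤ) ∧ IsCoprime P.1 P.2) :
    s.card ≤ 15 * n.divisors.card := by
  rcases s.eq_empty_or_nonempty with rfl | ⟨P0, hP0⟩
  · simp
  obtain ⟨h0, c0⟩ := hs P0 hP0
  let D : ℤ × ℤ → ℕ := fun P => Int.gcd (P.1 * P0.2 - P.2 * P0.1) n
  refine Finset.card_le_mul_card_image_of_maps_to (f := D) (t := n.divisors) ?_ 15 ?_
  · intro P hP
    simp only [Nat.mem_divisors]
    refine ⟨?_, hn⟩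
    have : ((D P : ℕ) : ℤ) ∣ n := Int.gcd_dvd_right _ _
    exact_mod_cast this
  intro d hd
  rcases (s.filter (fun P => D P = d)).eq_empty_or_nonempty with h | ⟨P, hP⟩
  · rw [h]; simp
  have hnz : (n : ℤ) ≠ 0 := by exact_mod_cast hn
  have hdn : d ≠ 0 := by
    rintro rfl
    simp at hd
  have hdz : (d : ℤ) ≠ 0 := by exact_mod_cast hdn
  obtain ⟨e, he⟩ : d ∣ n := Nat.dvd_of_mem_divisors hd
  have hez : (n : ℤ) = d * e := by exact_mod_cast he
  have facts : ∀ R ∈ s.filter (fun P => D P = d), (d : ℤ) ∣ (R.1 * P0.2 - R.2 * P0.1) ∧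
      (e : ℤ) ∣ (R.1 * P0.2 + R.2 * P0.1) := by
    intro R hR
    simp only [Finset.mem_filter] at hR
    obtain ⟨hRs, hRd⟩ := hR
    obtain ⟨h1, c1⟩ := hs R hRs
    have a1 : (d : ℤ) ∣ (R.1 * P0.2 - R.2 * P0.1) := by
      rw [← hRd]; exact Int.gcd_dvd_left _ _
    refine ⟨a1, ?_⟩
    obtain ⟨a, ha⟩ := a1
    have hg : Int.gcd (d * a) (d * e) = d := by
      rw [← ha, ← hez]; exact hRd
    rw [Int.gcd_mul_left] at hg
    have hg1 : Int.gcd a e = 1 := by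
      rw [Int.natAbs_natCast] at hg
      exact Nat.eq_of_mul_eq_mul_left (Nat.pos_of_ne_zero hdn) (by rw [hg, mul_one])
    have hdvd : (e : ℤ) ∣ a * (R.1 * P0.2 + R.2 * P0.1) := by
      refine ⟨R.1 ^ 2 - P0.1 ^ 2, ?_⟩
      apply mul_left_cancel₀ hdz
      have : (R.1 * P0.2 - R.2 * P0.1) * (R.1 * P0.2 + R.2 * P0.1) =
          n * (R.1 ^ 2 - P0.1 ^ 2) := by
        linear_combination (-P0.1 ^ 2) * h1 + R.1 ^ 2 * h0
      rw [ha, hez] at this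
      linear_combination this
    exact (Int.isCoprime_iff_gcd_eq_one.2 hg1).symm.dvd_of_dvd_mul_left hdvd
  -- gcd d e divides two
  have coprime_aux : ∀ R : ℤ × ℤ, R.1 ^ 2 + R.2 ^ 2 = (n : ℤ) → IsCoprime R.1 R.2 →
      IsCoprime R.1 (n : ℤ) ∧ IsCoprime R.2 (n : ℤ) := by
    intro R h1 c1
    constructor
    · rw [show (n : ℤ) = R.2 ^ 2 + R.1 * R.1 by rw [← h1]; ring]
      have : IsCoprime R.1 (R.2 ^ 2) := c1.pow_right
      exact this.add_mul_left_right R.1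
    · rw [show (n : ℤ) = R.1 ^ 2 + R.2 * R.2 by rw [← h1]; ring]
      have : IsCoprime R.2 (R.1 ^ 2) := c1.symm.pow_right
      exact this.add_mul_left_right R.2
  obtain ⟨hPs, hPd⟩ := Finset.mem_filter.1 hP
  obtain ⟨h1, c1⟩ := hs P hPs
  have main : ∀ R ∈ s.filter (fun P => D P = d), (n : ℤ) ∣ 2 * (P.1 * R.2 - P.2 * R.1) := by
    intro R hR
    obtain ⟨p1, p2⟩ := facts P hP
    obtain ⟨r1, r2⟩ := facts R hR
    have d1 : (d : ℤ) ∣ P.1 * R.2 - P.2 * R.1 := by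
      obtain ⟨u, v, huv⟩ := c0
      have : P.1 * R.2 - P.2 * R.1 =
        (R.1 * P0.2 - R.2 * P0.1) * (-u * P.1 - v * P.2) +
        (P.1 * P0.2 - P.2 * P0.1) * (u * R.1 + v * R.2) := by
        linear_combination (-(P.1 * R.2 - P.2 * R.1)) * huv
      rw [this]
      exact dvd_add (r1.mul_right _) (p1.mul_right _)
    have d2 : (e : ℤ) ∣ P.1 * R.2 - P.2 * R.1 := by
      obtain ⟨u, v, huv⟩ := c0
      have : P.1 * R.2 - P.2 * R.1 =
        (R.1 * P0.2 + R.2 * P0.1) * (u * P.1 - v * P.2) +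
        (P.1 * P0.2 + P.2 * P0.1) * (-u * R.1 + v * R.2) := by
        linear_combination (-(P.1 * R.2 - P.2 * R.1)) * huv
      rw [this]
      exact dvd_add (r2.mul_right _) (p2.mul_right _)
    have g2 : ((Int.gcd d e : ℕ) : ℤ) ∣ 2 := by
      have b1 : ((Int.gcd d e : ℕ) : ℤ) ∣ (P.1 * P0.2 - P.2 * P0.1) :=
        (Int.gcd_dvd_left _ _).trans p1
      have b2 : ((Int.gcd d e : ℕ) : ℤ) ∣ (P.1 * P0.2 + P.2 * P0.1) :=
        (Int.gcd_dvd_right _ _).trans p2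
      have b3 : ((Int.gcd d e : ℕ) : ℤ) ∣ (P.1 * P0.2) * 2 := by
        have := dvd_add b1 b2
        ring_nf at this ⊢
        exact this
      have b4 : IsCoprime ((Int.gcd d e : ℕ) : ℤ) (P.1 * P0.2) := by
        have hgn : ((Int.gcd d e : ℕ) : ℤ) ∣ n := by
          rw [hez]; exact (Int.gcd_dvd_left _ _).mul_right _
        have q1 := (coprime_aux P h1 c1).1.symm.of_isCoprime_of_dvd_left hgn
        have q2 := (coprime_aux P0 h0 c0).2.symm.of_isCoprime_of_dvd_left hgn
        exact q1.mul_right q2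
      exact b4.dvd_of_dvd_mul_left b3
    have hl := Int.coe_lcm_dvd d1 d2
    have : (n : ℤ) = (Int.gcd d e : ℕ) * (Int.lcm d e : ℕ) := by
      rw [hez]
      have := Int.gcd_mul_lcm (d : ℤ) (e : ℤ)
      rw [Int.natAbs_natCast, Int.natAbs_natCast] at this
      exact_mod_cast this.symm
    rw [this]
    exact mul_dvd_mul g2 hl
  let F : ℤ × ℤ → ℤ × ℤ := fun R => ((2 * (P.1 * R.2 - P.2 * R.1)) / n,
    Int.sign (P.1 * R.1 + P.2 * R.2))
  have hcard : ((Finset.Icc (-2 : ℤ) 2) ×ˢ (Finset.Icc (-1 : ℤ) 1)).card = 15 := by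
    simp
  rw [← hcard]
  have lag : ∀ R ∈ s.filter (fun P => D P = d),
      (P.1 * R.2 - P.2 * R.1) ^ 2 + (P.1 * R.1 + P.2 * R.2) ^ 2 = (n : ℤ) ^ 2 := by
    intro R hR
    obtain ⟨hRs, hRd⟩ := Finset.mem_filter.1 hR
    obtain ⟨h2, c2⟩ := hs R hRs
    linear_combination (R.1 ^ 2 + R.2 ^ 2) * h1 + (n : ℤ) * h2
  have hnpos : (0 : ℤ) < n := by positivity
  refine Finset.card_le_card_of_injOn F ?_ ?_
  · intro R hR
    have hR' := lag R hR
    obtain ⟨k, hk⟩ := main R hR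
    simp only [F, Finset.coe_product, Set.mem_prod, Finset.mem_coe, Finset.mem_Icc]
    rw [hk, Int.mul_ediv_cancel_left _ hnz]
    have hk2 : k ^ 2 ≤ 4 := by
      have : (n : ℤ) ^ 2 * k ^ 2 ≤ (n : ℤ) ^ 2 * 4 := by
        have e1 : (n : ℤ) ^ 2 * k ^ 2 = 4 * (P.1 * R.2 - P.2 * R.1) ^ 2 := by
          rw [← mul_pow, ← hk]; ring
        linarith [sq_nonneg (P.1 * R.1 + P.2 * R.2)]
      exact le_of_mul_le_mul_left this (by positivity)
    refine ⟨⟨by nlinarith, by nlinarith⟩, ?_⟩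
    rcases lt_trichotomy (P.1 * R.1 + P.2 * R.2) 0 with h | h | h
    · rw [Int.sign_eq_neg_one_of_neg h]; simp
    · rw [h]; simp
    · rw [Int.sign_eq_one_of_pos h]; simp
  · intro R hR R' hR' hF
    have l1 := lag R hR
    have l2 := lag R' hR'
    obtain ⟨k, hk⟩ := main R hR
    obtain ⟨k', hk'⟩ := main R' hR'
    simp only [F, Prod.mk.injEq] at hF
    obtain ⟨f1, f2⟩ := hF
    rw [hk, hk', Int.mul_ediv_cancel_left _ hnz, Int.mul_ediv_cancel_left _ hnz] at f1
    have hdet : P.1 * R.2 - P.2 * R.1 = P.1 * R'.2 - P.2 * R'.1 := by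
      rw [f1] at hk; linarith
    have hdot : P.1 * R.1 + P.2 * R.2 = P.1 * R'.1 + P.2 * R'.2 := by
      have hsq : (P.1 * R.1 + P.2 * R.2) ^ 2 = (P.1 * R'.1 + P.2 * R'.2) ^ 2 := by
        rw [hdet] at l1; linarith
      rw [← Int.sign_mul_abs (P.1 * R.1 + P.2 * R.2), ← Int.sign_mul_abs (P.1 * R'.1 + P.2 * R'.2),
        f2, sq_eq_sq_iff_abs_eq_abs _ _ |>.1 hsq]
    ext
    · apply mul_left_cancel₀ hnz
      linear_combination P.1 * hdot - P.2 * hdet - (R.1 - R'.1) * h1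
    · apply mul_left_cancel₀ hnz
      linear_combination P.2 * hdot + P.1 * hdet - (R.2 - R'.2) * h1

lemma reps (n : ℕ) (hn : n ≠ 0) (s : Finset (ℤ × ℤ))
    (hs : ∀ P ∈ s, P.1 ^ 2 + P.2 ^ 2 = (n : ℤ)) :
    s.card ≤ 15 * n.divisors.card ^ 2 := by
  let G : ℤ × ℤ → ℕ := fun P => Int.gcd P.1 P.2
  have gsq : ∀ P ∈ s, G P ^ 2 ∣ n := by
    intro P hP
    have h := hs P hP
    have a : ((G P : ℕ) : ℤ) ∣ P.1 := Int.gcd_dvd_left _ _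
    have b : ((G P : ℕ) : ℤ) ∣ P.2 := Int.gcd_dvd_right _ _
    have : ((G P : ℕ) : ℤ) ^ 2 ∣ n := by
      rw [← h]; exact dvd_add (pow_dvd_pow_of_dvd a 2) (pow_dvd_pow_of_dvd b 2)
    exact_mod_cast this
  have := Finset.card_le_mul_card_image_of_maps_to (f := G) (s := s) (t := n.divisors) ?_
    (15 * n.divisors.card) ?_
  · linarith [this, sq n.divisors.card]
  · intro P hP
    exact Nat.mem_divisors.2 ⟨(Dvd.intro_left (G P) (by ring)).trans (gsq P hP), hn⟩
  · intro g hg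
    rcases (s.filter (fun P => G P = g)).eq_empty_or_nonempty with h | ⟨P, hP⟩
    · rw [h]; simp
    obtain ⟨hPs, hPg⟩ := Finset.mem_filter.1 hP
    obtain ⟨q, hq⟩ : g ^ 2 ∣ n := hPg ▸ gsq P hPs
    have hg0 : g ≠ 0 := by rintro rfl; simp at hg
    have hgz : (g : ℤ) ≠ 0 := by exact_mod_cast hg0
    have hq0 : q ≠ 0 := by rintro rfl; simp at hq; exact hn hq
    have key := prim_reps q hq0 ((s.filter (fun P => G P = g)).image
      (fun P => (P.1 / g, P.2 / g))) ?_
    · rw [Finset.card_image_of_injOn] at key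
      · refine key.trans ?_
        gcongr
        exact Dvd.intro_left (g ^ 2) hq.symm
      · intro R hR R' hR' hRR
        simp only [Finset.coe_filter, Set.mem_ofPred_eq] at hR hR'
        have a : (g : ℤ) ∣ R.1 := hR.2 ▸ Int.gcd_dvd_left _ _
        have b : (g : ℤ) ∣ R.2 := hR.2 ▸ Int.gcd_dvd_right _ _
        have a' : (g : ℤ) ∣ R'.1 := hR'.2 ▸ Int.gcd_dvd_left _ _
        have b' : (g : ℤ) ∣ R'.2 := hR'.2 ▸ Int.gcd_dvd_right _ _
        simp only [Prod.mk.injEq] at hRR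
        ext
        · rw [← Int.mul_ediv_cancel' a, ← Int.mul_ediv_cancel' a', hRR.1]
        · rw [← Int.mul_ediv_cancel' b, ← Int.mul_ediv_cancel' b', hRR.2]
    · intro R hR
      obtain ⟨R', hR', rfl⟩ := Finset.mem_image.1 hR
      obtain ⟨h1, h2⟩ := Finset.mem_filter.1 hR'
      have a : (g : ℤ) ∣ R'.1 := h2 ▸ Int.gcd_dvd_left _ _
      have b : (g : ℤ) ∣ R'.2 := h2 ▸ Int.gcd_dvd_right _ _
      constructor
      · have h3 := hs R' h1
        rw [← Int.mul_ediv_cancel' a, ← Int.mul_ediv_cancel' b, hq] at h3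
        apply mul_left_cancel₀ (pow_ne_zero 2 hgz)
        push_cast at h3
        simp only
        linear_combination h3
      · rw [Int.isCoprime_iff_gcd_eq_one, ← h2]
        apply Int.gcd_div_gcd_div_gcd
        have : G R' ≠ 0 := h2 ▸ hg0
        exact Nat.pos_of_ne_zero this

lemma three_points (a1 a2 r x1 y1 x2 y2 x3 y3 : ℤ)
    (h1 : (2 * x1 - a1) ^ 2 + (2 * y1 - a2) ^ 2 = r)
    (h2 : (2 * x2 - a1) ^ 2 + (2 * y2 - a2) ^ 2 = r)
    (h3 : (2 * x3 - a1) ^ 2 + (2 * y3 - a2) ^ 2 = r) :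
    ((x2 - x1) ^ 2 + (y2 - y1) ^ 2) * ((x3 - x1) ^ 2 + (y3 - y1) ^ 2) *
      ((x3 - x2) ^ 2 + (y3 - y2) ^ 2) =
    r * ((x2 - x1) * (y3 - y1) - (x3 - x1) * (y2 - y1)) ^ 2 := by
  obtain ⟨u, hu⟩ : ∃ u, u = x2 - x1 := ⟨_, rfl⟩
  obtain ⟨v, hv⟩ : ∃ v, v = y2 - y1 := ⟨_, rfl⟩
  obtain ⟨w, hw⟩ : ∃ w, w = x3 - x1 := ⟨_, rfl⟩
  obtain ⟨z, hz⟩ : ∃ z, z = y3 - y1 := ⟨_, rfl⟩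
  obtain ⟨p, hp⟩ : ∃ p, p = 2 * x1 - a1 := ⟨_, rfl⟩
  obtain ⟨q, hq⟩ : ∃ q, q = 2 * y1 - a2 := ⟨_, rfl⟩
  have e1 : u ^ 2 + v ^ 2 = - (p * u + q * v) := by
    subst hu hv hp hq; nlinarith
  have e2 : w ^ 2 + z ^ 2 = - (p * w + q * z) := by
    subst hw hz hp hq; nlinarith
  have e3 : r = p ^ 2 + q ^ 2 := by subst hp hq; linarith
  have e4 : (x3 - x2) ^ 2 + (y3 - y2) ^ 2 = (w - u) ^ 2 + (z - v) ^ 2 := by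
    subst hu hv hw hz; ring
  rw [e4, ← hu, ← hv, ← hw, ← hz, e3]
  have f1 : (p ^ 2 + q ^ 2) * (u * z - w * v) ^ 2 =
      ((p * u + q * v) * w - (p * w + q * z) * u) ^ 2 +
      ((p * u + q * v) * z - (p * w + q * z) * v) ^ 2 := by ring
  have g1 : p * u + q * v = -(u ^ 2 + v ^ 2) := by linarith
  have g2 : p * w + q * z = -(w ^ 2 + z ^ 2) := by linarith
  rw [f1, g1, g2]
  ring

lemma sq_add_sq_pos_of_ne (v w : ℤ × ℤ) (h : v ≠ w) :
    0 < (w.1 - v.1) ^ 2 + (w.2 - v.2) ^ 2 := by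
  by_contra hc
  apply h
  have a : (w.1 - v.1) ^ 2 = 0 := by nlinarith [sq_nonneg (w.1 - v.1), sq_nonneg (w.2 - v.2)]
  have b : (w.2 - v.2) ^ 2 = 0 := by nlinarith [sq_nonneg (w.1 - v.1), sq_nonneg (w.2 - v.2)]
  have a' := pow_eq_zero_iff (two_ne_zero) |>.1 a
  have b' := pow_eq_zero_iff (two_ne_zero) |>.1 b
  ext <;> linarith

lemma dist_le (R : ℤ) (v w : ℤ × ℤ) (hv : |v.1| ≤ R ∧ |v.2| ≤ R) (hw : |w.1| ≤ R ∧ |w.2| ≤ R) :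
    (w.1 - v.1) ^ 2 + (w.2 - v.2) ^ 2 ≤ 8 * R ^ 2 := by
  obtain ⟨⟨a, b⟩, c, d⟩ := And.imp abs_le.1 abs_le.1 hv
  obtain ⟨⟨a', b'⟩, c', d'⟩ := And.imp abs_le.1 abs_le.1 hw
  have h1 : (w.1 - v.1) ^ 2 ≤ (2 * R) ^ 2 := sq_le_sq' (by linarith) (by linarith)
  have h2 : (w.2 - v.2) ^ 2 ≤ (2 * R) ^ 2 := sq_le_sq' (by linarith) (by linarith)
  linarith

lemma circle_bound (ε : ℝ) (hε : 0 < ε) : ∃ C : ℝ, 1 ≤ C ∧ ∀ (R : ℕ) (a : ℤ × ℤ) (r : ℤ)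
    (s : Finset (ℤ × ℤ)), 1 ≤ R → (∀ v ∈ s, (|v.1| ≤ R ∧ |v.2| ≤ R) ∧
      (2 * v.1 - a.1) ^ 2 + (2 * v.2 - a.2) ^ 2 = r) → (s.card : ℝ) ≤ C * (R : ℝ) ^ ε := by
  obtain ⟨D, hD1, hD⟩ := divisor_bound (ε / 12) (by positivity)
  have hD2 : 1 ≤ D ^ 2 := one_le_pow₀ hD1
  have h512 : 1 ≤ (512 : ℝ) ^ (ε / 6) := Real.one_le_rpow (by norm_num) (by positivity)
  have hC : 1 ≤ D ^ 2 * (512 : ℝ) ^ (ε / 6) := one_le_mul_of_one_le_of_one_le hD2 h512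
  refine ⟨15 * (D ^ 2 * (512 : ℝ) ^ (ε / 6)), by linarith, ?_⟩
  intro R a r s hR hs
  have hRe : 1 ≤ (R : ℝ) ^ ε := Real.one_le_rpow (by exact_mod_cast hR) hε.le
  rcases le_or_gt s.card 2 with h | h
  · have : (s.card : ℝ) ≤ 2 := by exact_mod_cast h
    have : 1 ≤ (D ^ 2 * (512 : ℝ) ^ (ε / 6)) * (R : ℝ) ^ ε :=
      one_le_mul_of_one_le_of_one_le hC hRe
    linarith
  obtain ⟨x, hx, y, hy, z, hz, hxy, hxz, hyz⟩ := Finset.two_lt_card.1 h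
  obtain ⟨bx, ex⟩ := hs x hx
  obtain ⟨by1, ey⟩ := hs y hy
  obtain ⟨bz, ez⟩ := hs z hz
  have key := three_points a.1 a.2 r _ _ _ _ _ _ ex ey ez
  have p1 := sq_add_sq_pos_of_ne x y hxy
  have p2 := sq_add_sq_pos_of_ne x z hxz
  have p3 := sq_add_sq_pos_of_ne y z hyz
  have q1 := dist_le R x y bx by1
  have q2 := dist_le R x z bx bz
  have q3 := dist_le R y z by1 bz
  generalize (y.1 - x.1) * (z.2 - x.2) - (z.1 - x.1) * (y.2 - x.2) = det at key
  have hpos : 0 < r * det ^ 2 := by rw [← key]; positivity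
  have hle : r * det ^ 2 ≤ 512 * (R : ℤ) ^ 6 := by
    rw [← key]
    calc _ ≤ (8 * (R : ℤ) ^ 2) * (8 * (R : ℤ) ^ 2) * (8 * (R : ℤ) ^ 2) := by gcongr
      _ = _ := by ring
  have hdet : 0 < det ^ 2 := by
    rcases (sq_nonneg det).lt_or_eq with h | h
    · exact h
    · rw [← h] at hpos; simp at hpos
  have hr : 0 < r := (mul_pos_iff_of_pos_right hdet).1 hpos
  have hrle : r ≤ 512 * (R : ℤ) ^ 6 := (le_mul_of_one_le_right hr.le hdet).trans hle
  obtain ⟨n, rfl⟩ := Int.eq_ofNat_of_zero_le hr.le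
  have hn : n ≠ 0 := by rintro rfl; simp at hr
  have hnle : n ≤ 512 * R ^ 6 := by exact_mod_cast hrle
  have cnt := reps n hn (s.image (fun v => (2 * v.1 - a.1, 2 * v.2 - a.2))) (by
    intro P hP
    obtain ⟨v, hv, rfl⟩ := Finset.mem_image.1 hP
    exact (hs v hv).2)
  rw [Finset.card_image_of_injective _ (by
    intro v w hvw
    simp only [Prod.mk.injEq] at hvw
    ext <;> omega)] at cnt
  have cnt' : (s.card : ℝ) ≤ 15 * (n.divisors.card : ℝ) ^ 2 := by exact_mod_cast cnt
  have hn' : (n : ℝ) ≤ 512 * (R : ℝ) ^ 6 := by exact_mod_cast hnle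
  calc (s.card : ℝ) ≤ 15 * (n.divisors.card : ℝ) ^ 2 := cnt'
    _ ≤ 15 * (D * (n : ℝ) ^ (ε / 12)) ^ 2 := by gcongr; exact hD n hn
    _ ≤ 15 * (D * (512 * (R : ℝ) ^ 6) ^ (ε / 12)) ^ 2 := by gcongr
    _ = _ := by
      rw [Real.mul_rpow (by norm_num) (by positivity), ← Real.rpow_natCast (R : ℝ) 6,
        ← Real.rpow_mul (by positivity), mul_pow, mul_pow,
        ← Real.rpow_natCast ((512 : ℝ) ^ (ε / 12)) 2, ← Real.rpow_mul (by norm_num),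
        ← Real.rpow_natCast ((R : ℝ) ^ _) 2, ← Real.rpow_mul (by positivity)]
      push_cast
      rw [show ε / 12 * 2 = ε / 6 by ring, show 6 * (ε / 12) * 2 = ε by ring]
      ring

lemma residue_card (S K : ℕ) (_ : 1 ≤ K) (A : Finset ℤ) (hA : ∀ x ∈ A, |x| ≤ S)
    (hc : ∀ x ∈ A, ∀ y ∈ A, (K : ℤ) ∣ x - y) : A.card ≤ 2 * S / K + 1 := by
  have : A.card ≤ (Finset.range (2 * S / K + 1)).card := by
    refine Finset.card_le_card_of_injOn (fun x => (x + S).toNat / K) ?_ ?_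
    · intro x hx
      have := abs_le.1 (hA x hx)
      simp only [Finset.coe_range, Set.mem_Iio]
      apply Nat.lt_succ_of_le
      apply Nat.div_le_div_right
      omega
    · intro x hx y hy hxy
      have h1 := abs_le.1 (hA x hx)
      have h2 := abs_le.1 (hA y hy)
      have h3 := hc x hx y hy
      simp only at hxy
      have hx0 : ((x + S).toNat : ℤ) = x + S := Int.toNat_of_nonneg (by linarith)
      have hy0 : ((y + S).toNat : ℤ) = y + S := Int.toNat_of_nonneg (by linarith)
      have hmod : (y + S).toNat ≡ (x + S).toNat [MOD K] := by
        rw [← Int.natCast_modEq_iff, Int.modEq_iff_dvd, hx0, hy0]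
        simpa using h3
      have e1 := Nat.div_add_mod (x + S).toNat K
      have e2 := Nat.div_add_mod (y + S).toNat K
      rw [hxy, ← hmod] at e1
      have : (x + S).toNat = (y + S).toNat := by rw [← e1, e2]
      omega
  simpa using this

lemma line_card_aux (w1 w2 k : ℤ) (S : ℕ) (h : w1 ≠ 0) (s : Finset (ℤ × ℤ))
    (hs : ∀ x ∈ s, |x.2| ≤ S ∧ w1 * x.1 + w2 * x.2 = k) :
    s.card ≤ 2 * S / (w1.natAbs / Int.gcd w1 w2) + 1 := by
  have hg : 0 < Int.gcd w1 w2 := Int.gcd_pos_of_ne_zero_left _ h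
  have hgz : (Int.gcd w1 w2 : ℤ) ≠ 0 := by exact_mod_cast hg.ne'
  have hdvd : Int.gcd w1 w2 ∣ w1.natAbs := Int.gcd_dvd_natAbs_left _ _
  rw [← Finset.card_image_of_injOn (f := Prod.snd) (s := s)]
  · apply residue_card
    · exact Nat.div_pos (Nat.le_of_dvd (Int.natAbs_pos.2 h) hdvd) hg
    · intro x hx
      obtain ⟨y, hy, rfl⟩ := Finset.mem_image.1 hx
      exact (hs y hy).1
    · intro x hx y hy
      obtain ⟨x, hx', rfl⟩ := Finset.mem_image.1 hx
      obtain ⟨y, hy', rfl⟩ := Finset.mem_image.1 hy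
      have e1 := (hs x hx').2
      have e2 := (hs y hy').2
      have a : (Int.gcd w1 w2 : ℤ) ∣ w1 := Int.gcd_dvd_left _ _
      have b : (Int.gcd w1 w2 : ℤ) ∣ w2 := Int.gcd_dvd_right _ _
      have e3 : w1 / Int.gcd w1 w2 ∣ (w2 / Int.gcd w1 w2) * (x.2 - y.2) := by
        refine ⟨-(x.1 - y.1), ?_⟩
        apply mul_left_cancel₀ hgz
        rw [← mul_assoc, ← mul_assoc, Int.mul_ediv_cancel' a, Int.mul_ediv_cancel' b]
        linear_combination e1 - e2
      have e4 : IsCoprime (w1 / Int.gcd w1 w2) (w2 / Int.gcd w1 w2) := by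
        rw [Int.isCoprime_iff_gcd_eq_one]
        exact Int.gcd_div_gcd_div_gcd hg
      have e5 := e4.dvd_of_dvd_mul_left e3
      rw [← Int.natAbs_dvd] at e5
      rw [Int.natAbs_ediv_of_dvd a] at e5
      simpa using e5
  · intro x hx y hy hxy
    have e1 := (hs x hx).2
    have e2 := (hs y hy).2
    have hxy : x.2 = y.2 := hxy
    ext
    · apply mul_left_cancel₀ h
      rw [hxy] at e1; linarith
    · exact hxy

/-- Size of the primitive vector in the direction of `w`. -/
def Kf (w : ℤ × ℤ) : ℕ := max w.1.natAbs w.2.natAbs / Int.gcd w.1 w.2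

lemma Kf_pos (w : ℤ × ℤ) (h : w ≠ 0) : 1 ≤ Kf w := by
  have h' : w.1 ≠ 0 ∨ w.2 ≠ 0 := by
    by_contra hc
    push Not at hc
    exact h (Prod.ext hc.1 hc.2)
  have hg : 0 < Int.gcd w.1 w.2 := Int.gcd_pos_iff.2 h'
  apply Nat.div_pos _ hg
  rcases h' with h' | h'
  · exact (Nat.le_of_dvd (Int.natAbs_pos.2 h') (Int.gcd_dvd_natAbs_left _ _)).trans (le_max_left _ _)
  · exact (Nat.le_of_dvd (Int.natAbs_pos.2 h') (Int.gcd_dvd_natAbs_right _ _)).trans (le_max_right _ _)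

lemma line_card (w : ℤ × ℤ) (k : ℤ) (S : ℕ) (h : w ≠ 0) (s : Finset (ℤ × ℤ))
    (hs : ∀ x ∈ s, (|x.1| ≤ S ∧ |x.2| ≤ S) ∧ w.1 * x.1 + w.2 * x.2 = k) :
    s.card ≤ 2 * S / Kf w + 1 := by
  unfold Kf
  rcases le_total w.1.natAbs w.2.natAbs with hle | hle
  · rw [max_eq_right hle]
    have h2 : w.2 ≠ 0 := by
      intro h2
      apply h
      rw [h2] at hle
      have : w.1 = 0 := by simpa using hle
      exact Prod.ext this h2
    have := line_card_aux w.2 w.1 k S h2 (s.image Prod.swap) (by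
      intro x hx
      obtain ⟨y, hy, rfl⟩ := Finset.mem_image.1 hx
      refine ⟨(hs y hy).1.1, ?_⟩
      have := (hs y hy).2
      simp only [Prod.fst_swap, Prod.snd_swap]; linarith)
    rw [Finset.card_image_of_injective _ Prod.swap_injective, Int.gcd_comm] at this
    exact this
  · rw [max_eq_left hle]
    have h2 : w.1 ≠ 0 := by
      intro h2
      apply h
      rw [h2] at hle
      have : w.2 = 0 := by simpa using hle
      exact Prod.ext h2 this
    exact line_card_aux w.1 w.2 k S h2 s (fun x hx => ⟨(hs x hx).1.2, (hs x hx).2⟩)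

lemma Kf_fiber_card (R K : ℕ) (hK : 1 ≤ K) (hKR : K ≤ R) (c : ℤ × ℤ) (s : Finset (ℤ × ℤ))
    (hs : ∀ v ∈ s, (|v.1| ≤ R ∧ |v.2| ≤ R) ∧ v ≠ c ∧ Kf (v - c) = K) : s.card ≤ 36 * R := by
  let G : ℤ × ℤ → ℤ := fun v => (Int.gcd (v.1 - c.1) (v.2 - c.2) : ℤ)
  let W : ℤ × ℤ → ℤ × ℤ := fun v => ((v.1 - c.1) / G v, (v.2 - c.2) / G v)
  have prop : ∀ v ∈ s, v.1 = c.1 + G v * (W v).1 ∧ v.2 = c.2 + G v * (W v).2 ∧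
      ((W v).1.natAbs = K ∧ (W v).2.natAbs ≤ K ∨ (W v).2.natAbs = K ∧ (W v).1.natAbs ≤ K) := by
    intro v hv
    obtain ⟨hb, hne, hk⟩ := hs v hv
    have a : G v ∣ v.1 - c.1 := Int.gcd_dvd_left _ _
    have b : G v ∣ v.2 - c.2 := Int.gcd_dvd_right _ _
    refine ⟨?_, ?_, ?_⟩
    · simp only [W]; rw [Int.mul_ediv_cancel' a]; ring
    · simp only [W]; rw [Int.mul_ediv_cancel' b]; ring
    · have e1 : (W v).1.natAbs = (v.1 - c.1).natAbs / Int.gcd (v.1 - c.1) (v.2 - c.2) := by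
        simp only [W]; rw [Int.natAbs_ediv_of_dvd a]; simp [G]
      have e2 : (W v).2.natAbs = (v.2 - c.2).natAbs / Int.gcd (v.1 - c.1) (v.2 - c.2) := by
        simp only [W]; rw [Int.natAbs_ediv_of_dvd b]; simp [G]
      rw [← hk, e1, e2]
      unfold Kf
      simp only [Prod.fst_sub, Prod.snd_sub]
      rcases le_total (v.1 - c.1).natAbs (v.2 - c.2).natAbs with hle | hle
      · right
        rw [max_eq_right hle]
        exact ⟨rfl, Nat.div_le_div_right hle⟩
      · left
        rw [max_eq_left hle]
        exact ⟨rfl, Nat.div_le_div_right hle⟩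
  let I : Finset ℤ := Finset.Icc (-(K : ℤ)) K
  let E : Finset ℤ := {(K : ℤ), -(K : ℤ)}
  let T : Finset (ℤ × ℤ) := E ×ˢ I ∪ I ×ˢ E
  have hE : E.card ≤ 2 := Finset.card_le_two
  have hI : I.card = 2 * K + 1 := by simp [I]; omega
  have hT : T.card ≤ 12 * K := by
    calc T.card ≤ (E ×ˢ I).card + (I ×ˢ E).card := Finset.card_union_le _ _
      _ = E.card * I.card + I.card * E.card := by rw [Finset.card_product, Finset.card_product]
      _ ≤ 2 * (2 * K + 1) + (2 * K + 1) * 2 := by rw [hI]; gcongr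
      _ ≤ 12 * K := by omega
  have := Finset.card_le_mul_card_image_of_maps_to (f := W) (s := s) (t := T) ?_
    (2 * R / K + 1) ?_
  · have h1 : K * (2 * R / K) ≤ 2 * R := Nat.mul_div_le _ _
    calc s.card ≤ (2 * R / K + 1) * T.card := this
      _ ≤ (2 * R / K + 1) * (12 * K) := by gcongr
      _ = 12 * (K * (2 * R / K)) + 12 * K := by ring
      _ ≤ _ := by omega
  · intro v hv
    obtain ⟨_, _, h3⟩ := prop v hv
    simp only [T, E, I, Finset.mem_union, Finset.mem_product, Finset.mem_Icc, Finset.mem_insert, Finset.mem_singleton]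
    omega
  · intro w hw
    by_cases hne : (s.filter (fun v => W v = w)) = ∅
    · rw [hne]; simp
    obtain ⟨v0, hv0⟩ := Finset.nonempty_iff_ne_empty.2 hne
    obtain ⟨hv0s, hv0w⟩ := Finset.mem_filter.1 hv0
    obtain ⟨_, _, h3⟩ := prop v0 hv0s
    rw [hv0w] at h3
    rcases h3 with ⟨h3, _⟩ | ⟨h3, _⟩
    · rw [← Finset.card_image_of_injOn (f := Prod.fst)]
      · apply residue_card _ _ hK
        · intro x hx
          obtain ⟨y, hy, rfl⟩ := Finset.mem_image.1 hx
          exact (hs y (Finset.mem_filter.1 hy).1).1.1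
        · intro x hx y hy
          obtain ⟨x, hx', rfl⟩ := Finset.mem_image.1 hx
          obtain ⟨y, hy', rfl⟩ := Finset.mem_image.1 hy
          obtain ⟨hx1, hx2⟩ := Finset.mem_filter.1 hx'
          obtain ⟨hy1, hy2⟩ := Finset.mem_filter.1 hy'
          rw [(prop x hx1).1, (prop y hy1).1, hx2, hy2, ← h3, Int.natAbs_dvd]
          exact ⟨G x - G y, by ring⟩
      · intro x hx y hy hxy
        obtain ⟨hx1, hx2⟩ := Finset.mem_filter.1 hx
        obtain ⟨hy1, hy2⟩ := Finset.mem_filter.1 hy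
        obtain ⟨a1, a2, _⟩ := prop x hx1
        obtain ⟨b1, b2, _⟩ := prop y hy1
        have hxy : x.1 = y.1 := hxy
        have w0 : w.1 ≠ 0 := by intro h; rw [h] at h3; simp at h3; omega
        rw [hx2] at a1 a2
        rw [hy2] at b1 b2
        have : G x = G y := by
          apply mul_right_cancel₀ w0; linarith
        ext
        · exact hxy
        · rw [a2, b2, this]
    · rw [← Finset.card_image_of_injOn (f := Prod.snd)]
      · apply residue_card _ _ hK
        · intro x hx
          obtain ⟨y, hy, rfl⟩ := Finset.mem_image.1 hx
          exact (hs y (Finset.mem_filter.1 hy).1).1.2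
        · intro x hx y hy
          obtain ⟨x, hx', rfl⟩ := Finset.mem_image.1 hx
          obtain ⟨y, hy', rfl⟩ := Finset.mem_image.1 hy
          obtain ⟨hx1, hx2⟩ := Finset.mem_filter.1 hx'
          obtain ⟨hy1, hy2⟩ := Finset.mem_filter.1 hy'
          rw [(prop x hx1).2.1, (prop y hy1).2.1, hx2, hy2, ← h3, Int.natAbs_dvd]
          exact ⟨G x - G y, by ring⟩
      · intro x hx y hy hxy
        obtain ⟨hx1, hx2⟩ := Finset.mem_filter.1 hx
        obtain ⟨hy1, hy2⟩ := Finset.mem_filter.1 hy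
        obtain ⟨a1, a2, _⟩ := prop x hx1
        obtain ⟨b1, b2, _⟩ := prop y hy1
        have hxy : x.2 = y.2 := hxy
        have w0 : w.2 ≠ 0 := by intro h; rw [h] at h3; simp at h3; omega
        rw [hx2] at a1 a2
        rw [hy2] at b1 b2
        have : G x = G y := by
          apply mul_right_cancel₀ w0; linarith
        ext
        · rw [a1, b1, this]
        · exact hxy

/-- The box of sup-norm radius `R`. -/
noncomputable def box (R : ℕ) : Finset (ℤ × ℤ) := Finset.Icc (-(R : ℤ)) R ×ˢ Finset.Icc (-(R : ℤ)) R

lemma mem_box (R : ℕ) (v : ℤ × ℤ) : v ∈ box R ↔ |v.1| ≤ R ∧ |v.2| ≤ R := by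
  simp [box, abs_le]

lemma card_box (R : ℕ) (hR : 1 ≤ R) : (box R).card ≤ 9 * R ^ 2 := by
  have : (Finset.Icc (-(R : ℤ)) R).card ≤ 3 * R := by simp; omega
  unfold box
  rw [Finset.card_product]
  nlinarith

lemma sum_Kf (R : ℕ) (hR : 1 ≤ R) (c : ℤ × ℤ) :
    ∑ v ∈ (box R).filter (fun v => v ≠ c), (1 : ℝ) / Kf (v - c) ≤
      45 * R * (1 + Real.log R) := by
  have hRpos : (0 : ℝ) < R := by exact_mod_cast hR
  have hlog : 0 ≤ Real.log R := Real.log_nonneg (by exact_mod_cast hR)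
  set B := (box R).filter (fun v => v ≠ c) with hB
  rw [← Finset.sum_filter_add_sum_filter_not B (fun v => Kf (v - c) ≤ R)]
  have p1 : ∑ v ∈ B.filter (fun v => ¬ Kf (v - c) ≤ R), (1 : ℝ) / Kf (v - c) ≤ 9 * R := by
    calc _ ≤ ∑ v ∈ B.filter (fun v => ¬ Kf (v - c) ≤ R), (1 : ℝ) / R := by
          apply Finset.sum_le_sum
          intro v hv
          have := (Finset.mem_filter.1 hv).2
          push Not at this
          gcongr
      _ = (B.filter (fun v => ¬ Kf (v - c) ≤ R)).card * (1 / (R : ℝ)) := by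
          rw [Finset.sum_const, nsmul_eq_mul]
      _ ≤ (9 * R ^ 2) * (1 / (R : ℝ)) := by
          gcongr
          have : (B.filter (fun v => ¬ Kf (v - c) ≤ R)).card ≤ 9 * R ^ 2 :=
            ((Finset.card_filter_le _ _).trans (Finset.card_filter_le _ _)).trans (card_box R hR)
          exact_mod_cast this
      _ = _ := by field_simp
  have p2 : ∑ v ∈ B.filter (fun v => Kf (v - c) ≤ R), (1 : ℝ) / Kf (v - c) ≤
      36 * R * (1 + Real.log R) := by
    rw [← Finset.sum_fiberwise_of_maps_to (g := fun v => Kf (v - c)) (t := Finset.Icc 1 R)]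
    · calc _ ≤ ∑ K ∈ Finset.Icc 1 R, (36 * R : ℝ) * ((K : ℝ)⁻¹) := by
            apply Finset.sum_le_sum
            intro K hK
            rw [Finset.mem_Icc] at hK
            calc _ = ∑ v ∈ (B.filter (fun v => Kf (v - c) ≤ R)).filter (fun v => Kf (v - c) = K),
                    ((K : ℝ)⁻¹) := by
                  apply Finset.sum_congr rfl
                  intro v hv
                  rw [(Finset.mem_filter.1 hv).2, one_div]
              _ = ((B.filter (fun v => Kf (v - c) ≤ R)).filter (fun v => Kf (v - c) = K)).card *
                    ((K : ℝ)⁻¹) := by rw [Finset.sum_const, nsmul_eq_mul]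
              _ ≤ _ := by
                gcongr
                have := Kf_fiber_card R K hK.1 hK.2 c
                  ((B.filter (fun v => Kf (v - c) ≤ R)).filter (fun v => Kf (v - c) = K)) (by
                  intro v hv
                  simp only [hB, Finset.mem_filter, mem_box] at hv
                  exact ⟨hv.1.1.1, hv.1.1.2, hv.2⟩)
                exact_mod_cast this
        _ = 36 * R * ((harmonic R : ℚ) : ℝ) := by
            rw [← Finset.mul_sum, harmonic_eq_sum_Icc]; push_cast; rfl
        _ ≤ _ := by gcongr; exact harmonic_le_one_add_log R
    · intro v hv
      simp only [hB, Finset.mem_filter, mem_box] at hv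
      simp only [Finset.mem_Icc]
      exact ⟨Kf_pos _ (sub_ne_zero.2 hv.1.2), hv.2⟩
  nlinarith

lemma lines_bound (R S : ℕ) (hR : 1 ≤ R) (hRS : R ≤ S) (c : ℤ × ℤ) (k : ℤ × ℤ → ℤ)
    (s : Finset ((ℤ × ℤ) × (ℤ × ℤ)))
    (hs : ∀ t ∈ s, (|t.1.1| ≤ R ∧ |t.1.2| ≤ R) ∧ (|t.2.1| ≤ S ∧ |t.2.2| ≤ S) ∧ t.1 ≠ c ∧
      (t.1 - c).1 * t.2.1 + (t.1 - c).2 * t.2.2 = k t.1) :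
    (s.card : ℝ) ≤ 99 * S * R * (1 + Real.log R) := by
  have hRpos : (0 : ℝ) < R := by exact_mod_cast hR
  have hRS' : (R : ℝ) ≤ S := by exact_mod_cast hRS
  have hlog : 0 ≤ Real.log R := Real.log_nonneg (by exact_mod_cast hR)
  set B := (box R).filter (fun v => v ≠ c) with hB
  have h1 : s.card = ∑ v ∈ B, (s.filter (fun t => t.1 = v)).card := by
    apply Finset.card_eq_sum_card_fiberwise
    intro t ht
    have := hs t ht
    simp only [hB, Finset.coe_filter, mem_box, Set.mem_ofPred_eq]
    exact ⟨this.1, this.2.2.1⟩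
  have h2 : ∀ v ∈ B, ((s.filter (fun t => t.1 = v)).card : ℝ) ≤ 2 * S * (1 / Kf (v - c)) + 1 := by
    intro v hv
    simp only [hB, Finset.mem_filter] at hv
    have := line_card (v - c) (k v) S (sub_ne_zero.2 hv.2)
      ((s.filter (fun t => t.1 = v)).image Prod.snd) (by
        intro x hx
        obtain ⟨t, ht, rfl⟩ := Finset.mem_image.1 hx
        obtain ⟨ht1, rfl⟩ := Finset.mem_filter.1 ht
        obtain ⟨_, b, _, d⟩ := hs t ht1
        exact ⟨b, d⟩)
    rw [Finset.card_image_of_injOn] at this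
    · calc ((s.filter (fun t => t.1 = v)).card : ℝ) ≤ ((2 * S / Kf (v - c) + 1 : ℕ) : ℝ) := by
            exact_mod_cast this
        _ = ((2 * S / Kf (v - c) : ℕ) : ℝ) + 1 := by push_cast; rfl
        _ ≤ ((2 * S : ℕ) : ℝ) / (Kf (v - c) : ℕ) + 1 := by gcongr; exact Nat.cast_div_le
        _ = _ := by push_cast; ring
    · intro t ht t' ht' htt
      have a := (Finset.mem_filter.1 ht).2
      have b := (Finset.mem_filter.1 ht').2
      exact Prod.ext (a.trans b.symm) htt
  have h3 : (B.card : ℝ) ≤ 9 * R ^ 2 := by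
    have := (Finset.card_filter_le (box R) (fun v => v ≠ c)).trans (card_box R hR)
    exact_mod_cast this
  calc (s.card : ℝ) = ∑ v ∈ B, ((s.filter (fun t => t.1 = v)).card : ℝ) := by
        rw [h1]; push_cast; rfl
    _ ≤ ∑ v ∈ B, (2 * S * ((1 : ℝ) / Kf (v - c)) + 1) := Finset.sum_le_sum h2
    _ = 2 * S * ∑ v ∈ B, (1 : ℝ) / Kf (v - c) + B.card := by
        rw [Finset.sum_add_distrib, Finset.mul_sum]; simp
    _ ≤ 2 * S * (45 * R * (1 + Real.log R)) + 9 * R ^ 2 := by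
        gcongr; exact sum_Kf R hR c
    _ ≤ 2 * S * (45 * R * (1 + Real.log R)) + 9 * S * R * (1 + Real.log R) := by
        have : (R : ℝ) * R ≤ S * R := by gcongr
        have : 0 ≤ (S : ℝ) * R * Real.log R := by positivity
        nlinarith
    _ = _ := by ring

lemma lines_bound' (ε : ℝ) (hε : 0 < ε) : ∃ C : ℝ, 1 ≤ C ∧ 
    ∀ (R S : ℕ) (_ : 1 ≤ R) (_ : R ≤ S) (c : ℤ × ℤ) (k : ℤ × ℤ → ℤ)
    (s : Finset ((ℤ × ℤ) × (ℤ × ℤ)))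
    (_ : ∀ t ∈ s, (|t.1.1| ≤ R ∧ |t.1.2| ≤ R) ∧ (|t.2.1| ≤ S ∧ |t.2.2| ≤ S) ∧ t.1 ≠ c ∧
      (t.1 - c).1 * t.2.1 + (t.1 - c).2 * t.2.2 = k t.1),
    (s.card : ℝ) ≤ C * ((R : ℝ) * S) ^ (1 + ε) := by
  have h0 : 0 < 1 / ε := by positivity
  refine ⟨99 * (1 + 1 / ε), by linarith, ?_⟩
  intro R S hR hRS c k s hs
  have h1 := lines_bound R S hR hRS c k s hs
  have hR1 : (1 : ℝ) ≤ R := by exact_mod_cast hR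
  have hS1 : (1 : ℝ) ≤ S := by exact_mod_cast hR.trans hRS
  have h2 : Real.log R ≤ (R : ℝ) ^ ε / ε := Real.log_le_rpow_div (by positivity) hε
  have h3 : 1 ≤ (R : ℝ) ^ ε := Real.one_le_rpow hR1 hε.le
  have h4 : 1 + Real.log R ≤ (1 + 1 / ε) * (R : ℝ) ^ ε := by
    have : (R : ℝ) ^ ε / ε = 1 / ε * (R : ℝ) ^ ε := by ring
    linarith
  have h5 : (R : ℝ) ^ ε ≤ (R * S : ℝ) ^ ε := by
    apply Real.rpow_le_rpow (by positivity) _ hε.le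
    nlinarith
  calc (s.card : ℝ) ≤ 99 * S * R * (1 + Real.log R) := h1
    _ ≤ 99 * S * R * ((1 + 1 / ε) * (R * S : ℝ) ^ ε) := by
        gcongr
        exact h4.trans (by gcongr)
    _ = _ := by
        rw [Real.rpow_add (by positivity), Real.rpow_one]; ring

/-- The triples `(n, n₁, n₃)` that go with a given `n₂`. -/
def Good (A B D : ℕ) (c : ℤ × ℤ) (m : ℤ) (t : (ℤ × ℤ) × (ℤ × ℤ) × (ℤ × ℤ)) : Prop :=
  (|t.1.1| ≤ A ∧ |t.1.2| ≤ A) ∧ (|t.2.1.1| ≤ B ∧ |t.2.1.2| ≤ B) ∧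
  (|t.2.2.1| ≤ D ∧ |t.2.2.2| ≤ D) ∧ t.1 = t.2.1 - c + t.2.2 ∧ t.1 ≠ t.2.1 ∧ t.1 ≠ t.2.2 ∧
  phiFn t.1 t.2.1 c t.2.2 = m

/-- Exchange `n₁` and `n₃`. -/
def sw (t : (ℤ × ℤ) × (ℤ × ℤ) × (ℤ × ℤ)) : (ℤ × ℤ) × (ℤ × ℤ) × (ℤ × ℤ) := (t.1, t.2.2, t.2.1)

lemma sw_inj : Function.Injective sw := by
  rintro ⟨a, b, c⟩ ⟨a', b', c'⟩ h
  simp only [sw, Prod.mk.injEq] at h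
  simp [h]

lemma Good.swap {A B D : ℕ} {c : ℤ × ℤ} {m : ℤ} {t : (ℤ × ℤ) × (ℤ × ℤ) × (ℤ × ℤ)}
    (h : Good A B D c m t) : Good A D B c m (sw t) := by
  obtain ⟨h1, h2, h3, h4, h5, h6, h7⟩ := h
  refine ⟨h1, h3, h2, ?_, h6, h5, ?_⟩
  · simp only [sw]; rw [h4]; abel
  · rw [← h7]; simp only [sw, phiFn]; ring

lemma good_swap_image {A B D : ℕ} {c : ℤ × ℤ} {m : ℤ}
    {s : Finset ((ℤ × ℤ) × (ℤ × ℤ) × (ℤ × ℤ))} (hs : ∀ t ∈ s, Good A B D c m t) :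
    ∀ t ∈ s.image sw, Good A D B c m t := by
  intro t ht
  obtain ⟨u, hu, rfl⟩ := Finset.mem_image.1 ht
  exact (hs u hu).swap

lemma Good.n3 {A B D : ℕ} {c : ℤ × ℤ} {m : ℤ} {t : (ℤ × ℤ) × (ℤ × ℤ) × (ℤ × ℤ)}
    (h : Good A B D c m t) : t.2.2 = t.1 - t.2.1 + c := by
  rw [h.2.2.2.1]; abel

lemma Good.n1_ne {A B D : ℕ} {c : ℤ × ℤ} {m : ℤ} {t : (ℤ × ℤ) × (ℤ × ℤ) × (ℤ × ℤ)}
    (h : Good A B D c m t) : t.2.1 ≠ c := by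
  intro hc
  apply h.2.2.2.2.2.1
  rw [h.2.2.2.1, hc]; abel

lemma Good.eqs {A B D : ℕ} {c : ℤ × ℤ} {m : ℤ} {t : (ℤ × ℤ) × (ℤ × ℤ) × (ℤ × ℤ)}
    (h : Good A B D c m t) : t.1.1 = t.2.1.1 - c.1 + t.2.2.1 ∧
      t.1.2 = t.2.1.2 - c.2 + t.2.2.2 ∧ 
      t.1.1 ^ 2 + t.1.2 ^ 2 - (t.2.1.1 ^ 2 + t.2.1.2 ^ 2) + (c.1 ^ 2 + c.2 ^ 2) -
        (t.2.2.1 ^ 2 + t.2.2.2 ^ 2) = m := by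
  refine ⟨?_, ?_, h.2.2.2.2.2.2⟩
  · have := congrArg Prod.fst h.2.2.2.1
    simpa using this
  · have := congrArg Prod.snd h.2.2.2.1
    simpa using this

lemma count1 (ε : ℝ) (hε : 0 < ε) : ∃ C : ℝ, 1 ≤ C ∧ ∀ (A B D : ℕ) (c : ℤ × ℤ) (m : ℤ)
    (s : Finset ((ℤ × ℤ) × (ℤ × ℤ) × (ℤ × ℤ))), 1 ≤ A → 1 ≤ B →
    (∀ t ∈ s, Good A B D c m t) → (s.card : ℝ) ≤ C * ((A : ℝ) ^ 2 * (B : ℝ) ^ ε) := by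
  obtain ⟨C, hC1, hC⟩ := circle_bound ε hε
  refine ⟨9 * C, by linarith, ?_⟩
  intro A B D c m s hA hB hs
  have h1 : s.card = ∑ v ∈ box A, (s.filter (fun t => t.1 = v)).card := by
    apply Finset.card_eq_sum_card_fiberwise
    intro t ht
    exact Finset.mem_coe.2 ((mem_box _ _).2 (hs t ht).1)
  have h2 : ∀ v ∈ box A, ((s.filter (fun t => t.1 = v)).card : ℝ) ≤ C * (B : ℝ) ^ ε := by
    intro v hv
    have := hC B (v + c) ((v.1 - c.1) ^ 2 + (v.2 - c.2) ^ 2 - 2 * m)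
      ((s.filter (fun t => t.1 = v)).image (fun t => t.2.1)) hB (by
        intro x hx
        obtain ⟨t, ht, rfl⟩ := Finset.mem_image.1 hx
        obtain ⟨ht1, rfl⟩ := Finset.mem_filter.1 ht
        have hg := hs t ht1
        refine ⟨hg.2.1, ?_⟩
        obtain ⟨e1, e2, e3⟩ := hg.eqs
        have f1 : t.2.2.1 = t.1.1 - t.2.1.1 + c.1 := by linarith
        have f2 : t.2.2.2 = t.1.2 - t.2.1.2 + c.2 := by linarith
        rw [f1, f2] at e3
        simp only [Prod.fst_add, Prod.snd_add]
        linear_combination (-2) * e3)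
    rw [Finset.card_image_of_injOn] at this
    · exact this
    · intro t ht t' ht' htt
      obtain ⟨a, a'⟩ := Finset.mem_filter.1 ht
      obtain ⟨b, b'⟩ := Finset.mem_filter.1 ht'
      have htt : t.2.1 = t'.2.1 := htt
      refine Prod.ext (a'.trans b'.symm) (Prod.ext htt ?_)
      rw [(hs t a).n3, (hs t' b).n3, a', b', htt]
  have h3 : ((box A).card : ℝ) ≤ 9 * (A : ℝ) ^ 2 := by exact_mod_cast card_box A hA
  calc (s.card : ℝ) = ∑ v ∈ box A, ((s.filter (fun t => t.1 = v)).card : ℝ) := by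
        rw [h1]; push_cast; rfl
    _ ≤ ∑ v ∈ box A, C * (B : ℝ) ^ ε := Finset.sum_le_sum h2
    _ = (box A).card * (C * (B : ℝ) ^ ε) := by rw [Finset.sum_const, nsmul_eq_mul]
    _ ≤ (9 * (A : ℝ) ^ 2) * (C * (B : ℝ) ^ ε) := by gcongr
    _ = _ := by ring

lemma count2 (ε : ℝ) (hε : 0 < ε) : ∃ C : ℝ, 1 ≤ C ∧ ∀ (A B D : ℕ) (c : ℤ × ℤ) (m : ℤ)
    (s : Finset ((ℤ × ℤ) × (ℤ × ℤ) × (ℤ × ℤ))), 1 ≤ B →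
    (∀ t ∈ s, Good A B D c m t) →
    (B ≤ A → (s.card : ℝ) ≤ C * ((A : ℝ) * B) ^ (1 + ε)) ∧
    (B ≤ D → (s.card : ℝ) ≤ C * ((B : ℝ) * D) ^ (1 + ε)) := by
  obtain ⟨C, hC1, hC⟩ := lines_bound' ε hε
  refine ⟨C, hC1, ?_⟩
  intro A B D c m s hB hs
  constructor
  · intro hBA
    have := hC B A hB hBA c (fun v => m / 2 + (v.1 * (v.1 - c.1) + v.2 * (v.2 - c.2)))
      (s.image (fun t => (t.2.1, t.1))) (by
        intro x hx
        obtain ⟨t, ht, rfl⟩ := Finset.mem_image.1 hx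
        have hg := hs t ht
        refine ⟨hg.2.1, hg.1, hg.n1_ne, ?_⟩
        obtain ⟨e1, e2, e3⟩ := hg.eqs
        have f1 : t.2.2.1 = t.1.1 - t.2.1.1 + c.1 := by linarith
        have f2 : t.2.2.2 = t.1.2 - t.2.1.2 + c.2 := by linarith
        rw [f1, f2] at e3
        have : m = 2 * ((t.1.1 - t.2.1.1) * (t.2.1.1 - c.1) +
          (t.1.2 - t.2.1.2) * (t.2.1.2 - c.2)) := by
          rw [← e3]; ring
        simp only [Prod.fst_sub, Prod.snd_sub]
        rw [this, Int.mul_ediv_cancel_left _ two_ne_zero]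
        ring)
    rw [Finset.card_image_of_injOn] at this
    · rwa [mul_comm (A : ℝ)]
    · intro t ht t' ht' htt
      simp only [Prod.mk.injEq] at htt
      refine Prod.ext htt.2 (Prod.ext htt.1 ?_)
      rw [(hs t ht).n3, (hs t' ht').n3, htt.1, htt.2]
  · intro hBD
    have := hC B D hB hBD c (fun v => m / 2 + (c.1 * (v.1 - c.1) + c.2 * (v.2 - c.2)))
      (s.image (fun t => (t.2.1, t.2.2))) (by
        intro x hx
        obtain ⟨t, ht, rfl⟩ := Finset.mem_image.1 hx
        have hg := hs t ht
        refine ⟨hg.2.1, hg.2.2.1, hg.n1_ne, ?_⟩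
        obtain ⟨e1, e2, e3⟩ := hg.eqs
        rw [e1, e2] at e3
        have : m = 2 * ((t.2.2.1 - c.1) * (t.2.1.1 - c.1) +
          (t.2.2.2 - c.2) * (t.2.1.2 - c.2)) := by
          rw [← e3]; ring
        simp only [Prod.fst_sub, Prod.snd_sub]
        rw [this, Int.mul_ediv_cancel_left _ two_ne_zero]
        ring)
    rw [Finset.card_image_of_injOn] at this
    · exact this
    · intro t ht t' ht' htt
      have htt : t.2 = t'.2 := htt
      refine Prod.ext ?_ htt
      rw [(hs t ht).2.2.2.1, (hs t' ht').2.2.2.1, htt]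

lemma one_le_dyadic_aux {A B : ℝ} {ε : ℝ} (hε : 0 < ε) (hA : 1 ≤ A) (hAB : A ≤ B) :
    A ^ 2 * B ^ ε ≤ (A * B) ^ (1 + ε) := by
  have hB : 1 ≤ B := hA.trans hAB
  have h5 : B ^ ε ≤ (A * B) ^ ε := by
    apply Real.rpow_le_rpow (by positivity) _ hε.le
    nlinarith
  rw [Real.rpow_add (by positivity), Real.rpow_one]
  have : A ^ 2 ≤ A * B := by nlinarith
  gcongr

lemma count_all (ε : ℝ) (hε : 0 < ε) : ∃ C : ℝ, 1 ≤ C ∧ ∀ (A B D : ℕ) (c : ℤ × ℤ) (m : ℤ)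
    (s : Finset ((ℤ × ℤ) × (ℤ × ℤ) × (ℤ × ℤ))), 1 ≤ A → 1 ≤ B → 1 ≤ D →
    (∀ t ∈ s, Good A B D c m t) → (s.card : ℝ) ≤ C *
      (min (min ((A : ℝ) * (min (B : ℝ) D) ^ ε) (((A : ℝ) * B) ^ ((1 : ℝ) / 2 + ε)))
        (min (((A : ℝ) * D) ^ ((1 : ℝ) / 2 + ε)) (((B : ℝ) * D) ^ ((1 : ℝ) / 2 + ε)))) ^ 2 := by
  obtain ⟨C1, hC1, h1⟩ := count1 (2 * ε) (by positivity)
  obtain ⟨C2, hC2, h2⟩ := count2 (2 * ε) (by positivity)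
  refine ⟨max C1 C2, le_max_of_le_left hC1, ?_⟩
  intro A B D c m s hA hB hD hs
  have hs' := good_swap_image hs
  have hcard : (s.image sw).card = s.card := Finset.card_image_of_injective _ sw_inj
  have hA' : (1 : ℝ) ≤ A := by exact_mod_cast hA
  have hB' : (1 : ℝ) ≤ B := by exact_mod_cast hB
  have hD' : (1 : ℝ) ≤ D := by exact_mod_cast hD
  have a1 := h1 A B D c m s hA hB hs
  have a2 := h1 A D B c m _ hA hD hs'
  have b1 := h2 A B D c m s hB hs
  have b2 := h2 A D B c m _ hD hs'
  rw [hcard] at a2 b2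
  set M := max C1 C2 with hM
  have hM0 : 0 ≤ M := le_max_of_le_left (by linarith)
  have m1 : C1 ≤ M := le_max_left _ _
  have m2 : C2 ≤ M := le_max_right _ _
  have sqr : ∀ x : ℝ, 0 ≤ x → (x ^ ((1 : ℝ) / 2 + ε)) ^ 2 = x ^ (1 + 2 * ε) := by
    intro x hx
    rw [← Real.rpow_natCast, ← Real.rpow_mul hx]; congr 1; push_cast; ring
  have sqr' : ∀ x : ℝ, 0 ≤ x → (x ^ ε) ^ 2 = x ^ (2 * ε) := by
    intro x hx
    rw [← Real.rpow_natCast, ← Real.rpow_mul hx]; congr 1; push_cast; ring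
  have X1 : (s.card : ℝ) ≤ M * ((A : ℝ) * (min (B : ℝ) D) ^ ε) ^ 2 := by
    rw [mul_pow, sqr' _ (by positivity)]
    rcases min_choice (B : ℝ) D with h | h <;> rw [h]
    · exact a1.trans (by gcongr)
    · exact a2.trans (by gcongr)
  have X2 : (s.card : ℝ) ≤ M * (((A : ℝ) * B) ^ ((1 : ℝ) / 2 + ε)) ^ 2 := by
    rw [sqr _ (by positivity)]
    rcases le_total A B with h | h
    · have h' : (A : ℝ) ≤ B := by exact_mod_cast h
      exact a1.trans (mul_le_mul m1 (one_le_dyadic_aux (by positivity) hA' h') (by positivity) hM0)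
    · exact (b1.1 h).trans (by gcongr)
  have X3 : (s.card : ℝ) ≤ M * (((A : ℝ) * D) ^ ((1 : ℝ) / 2 + ε)) ^ 2 := by
    rw [sqr _ (by positivity)]
    rcases le_total A D with h | h
    · have h' : (A : ℝ) ≤ D := by exact_mod_cast h
      exact a2.trans (mul_le_mul m1 (one_le_dyadic_aux (by positivity) hA' h') (by positivity) hM0)
    · exact (b2.1 h).trans (by gcongr)
  have X4 : (s.card : ℝ) ≤ M * (((B : ℝ) * D) ^ ((1 : ℝ) / 2 + ε)) ^ 2 := by
    rw [sqr _ (by positivity)]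
    rcases le_total B D with h | h
    · exact (b1.2 h).trans (by gcongr)
    · rw [mul_comm (B : ℝ)]
      exact (b2.2 h).trans (by gcongr)
  rcases min_choice (min ((A : ℝ) * (min (B : ℝ) D) ^ ε) (((A : ℝ) * B) ^ ((1 : ℝ) / 2 + ε)))
        (min (((A : ℝ) * D) ^ ((1 : ℝ) / 2 + ε)) (((B : ℝ) * D) ^ ((1 : ℝ) / 2 + ε)))
    with h | h <;> rw [h]
  · rcases min_choice ((A : ℝ) * (min (B : ℝ) D) ^ ε) (((A : ℝ) * B) ^ ((1 : ℝ) / 2 + ε))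
      with h | h <;> rw [h]
    · exact X1
    · exact X2
  · rcases min_choice (((A : ℝ) * D) ^ ((1 : ℝ) / 2 + ε)) (((B : ℝ) * D) ^ ((1 : ℝ) / 2 + ε))
      with h | h <;> rw [h]
    · exact X3
    · exact X4

lemma simDyadic_box {k : ℕ} {n : ℤ × ℤ} (h : simDyadic (2 ^ k) n) :
    |n.1| ≤ ((2 ^ k : ℕ) : ℤ) ∧ |n.2| ≤ ((2 ^ k : ℕ) : ℤ) := by
  have hz : znorm n ≤ 2 ^ k := by
    rcases h with ⟨h1, h2⟩ | ⟨_, _, h2⟩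
    · rw [h1]; exact h2
    · exact h2
  unfold znorm at hz
  have a : |(n.1 : ℝ)| ≤ 2 ^ k :=
    (Real.abs_le_sqrt (by nlinarith [sq_nonneg (n.2 : ℝ)])).trans hz
  have b : |(n.2 : ℝ)| ≤ 2 ^ k :=
    (Real.abs_le_sqrt (by nlinarith [sq_nonneg (n.1 : ℝ)])).trans hz
  exact ⟨by exact_mod_cast a, by exact_mod_cast b⟩

theorem stmt14 (ε : ℝ) (hε : 0 < ε) :
    ∃ C : ℝ, 0 < C ∧ ∀ N N₁ N₂ N₃ : ℝ,
      IsDyadic N → IsDyadic N₁ → IsDyadic N₂ → IsDyadic N₃ → ∀ m : ℤ,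
      ∀ f : ℤ × ℤ → ℝ, Summable (fun x => f x ^ 2) →
        Real.sqrt (∑' t : (ℤ × ℤ) × (ℤ × ℤ) × (ℤ × ℤ),
            (∑' n₂ : ℤ × ℤ, hten N N₁ N₂ N₃ m t.1 t.2.1 n₂ t.2.2 * f n₂) ^ 2) ≤
          C * min (min (N * (min N₁ N₃) ^ ε) ((N * N₁) ^ ((1 : ℝ) / 2 + ε)))
                  (min ((N * N₃) ^ ((1 : ℝ) / 2 + ε)) ((N₁ * N₃) ^ ((1 : ℝ) / 2 + ε))) *
            Real.sqrt (∑' x : ℤ × ℤ, f x ^ 2) := by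
  classical
  obtain ⟨C, hC1, hC⟩ := count_all ε hε
  refine ⟨C, by linarith, ?_⟩
  rintro N N₁ N₂ N₃ ⟨a, rfl⟩ ⟨b, rfl⟩ - ⟨d, rfl⟩ m f hf
  -- the only relevant `n₂`
  let q : (ℤ × ℤ) × (ℤ × ℤ) × (ℤ × ℤ) → ℤ × ℤ := fun t => t.2.1 + t.2.2 - t.1
  let P : (ℤ × ℤ) × (ℤ × ℤ) × (ℤ × ℤ) → Prop := fun t =>
    SMem (2 ^ a) (2 ^ b) N₂ (2 ^ d) m t.1 t.2.1 (q t) t.2.2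
  have inner : ∀ t : (ℤ × ℤ) × (ℤ × ℤ) × (ℤ × ℤ),
      (∑' n₂ : ℤ × ℤ, hten (2 ^ a) (2 ^ b) N₂ (2 ^ d) m t.1 t.2.1 n₂ t.2.2 * f n₂) ^ 2 =
      if P t then f (q t) ^ 2 else 0 := by
    intro t
    rw [tsum_eq_single (q t)]
    · by_cases h : P t
      · have : hten (2 ^ a) (2 ^ b) N₂ (2 ^ d) m t.1 t.2.1 (q t) t.2.2 = 1 := by
          unfold hten; exact if_pos h
        rw [this, if_pos h]; ring
      · have : hten (2 ^ a) (2 ^ b) N₂ (2 ^ d) m t.1 t.2.1 (q t) t.2.2 = 0 := by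
          unfold hten; exact if_neg h
        rw [this, if_neg h]; ring
    · intro n₂ hn
      have : hten (2 ^ a) (2 ^ b) N₂ (2 ^ d) m t.1 t.2.1 n₂ t.2.2 = 0 := by
        unfold hten
        apply if_neg
        intro h
        apply hn
        simp only [q]
        rw [h.1]; abel
      rw [this, zero_mul]
  simp_rw [inner]
  have good : ∀ t, P t → Good (2 ^ a) (2 ^ b) (2 ^ d) (q t) m t := by
    rintro t ⟨h1, h2, h3, h4, h5, h6, _, h8⟩
    exact ⟨simDyadic_box h5, simDyadic_box h6, simDyadic_box h8, h1, h2, h3, h4⟩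
  let T : Finset ((ℤ × ℤ) × (ℤ × ℤ) × (ℤ × ℤ)) :=
    (box (2 ^ a) ×ˢ (box (2 ^ b) ×ˢ box (2 ^ d))).filter P
  have hT : ∀ t, P t → t ∈ T := by
    intro t ht
    have hg := good t ht
    simp only [T, Finset.mem_filter, Finset.mem_product, mem_box]
    exact ⟨⟨hg.1, hg.2.1, hg.2.2.1⟩, ht⟩
  have hTP : ∀ t ∈ T, P t := fun t ht => (Finset.mem_filter.1 ht).2
  rw [tsum_eq_sum (s := T) (by
    intro t ht
    apply if_neg
    intro h
    exact ht (hT t h))]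
  set Z : ℝ := min (min ((2 : ℝ) ^ a * (min ((2 : ℝ) ^ b) (2 ^ d)) ^ ε)
      (((2 : ℝ) ^ a * 2 ^ b) ^ ((1 : ℝ) / 2 + ε)))
      (min (((2 : ℝ) ^ a * 2 ^ d) ^ ((1 : ℝ) / 2 + ε)) (((2 : ℝ) ^ b * 2 ^ d) ^ ((1 : ℝ) / 2 + ε)))
    with hZ
  have hZ0 : 0 ≤ Z := by
    rw [hZ]; positivity
  have hF0 : 0 ≤ ∑' x : ℤ × ℤ, f x ^ 2 := tsum_nonneg (fun x => sq_nonneg _)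
  have main : ∑ t ∈ T, (if P t then f (q t) ^ 2 else 0) ≤ C * Z ^ 2 * ∑' x : ℤ × ℤ, f x ^ 2 := by
    calc ∑ t ∈ T, (if P t then f (q t) ^ 2 else 0) = ∑ t ∈ T, f (q t) ^ 2 := by
          apply Finset.sum_congr rfl
          intro t ht
          rw [if_pos (hTP t ht)]
      _ = ∑ x ∈ T.image q, ∑ t ∈ T.filter (fun t => q t = x), f (q t) ^ 2 := by
          rw [Finset.sum_fiberwise_of_maps_to]
          intro t ht
          exact Finset.mem_image_of_mem _ ht
      _ = ∑ x ∈ T.image q, ((T.filter (fun t => q t = x)).card : ℝ) * f x ^ 2 := by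
          apply Finset.sum_congr rfl
          intro x _
          rw [← nsmul_eq_mul, ← Finset.sum_const]
          apply Finset.sum_congr rfl
          intro t ht
          rw [(Finset.mem_filter.1 ht).2]
      _ ≤ ∑ x ∈ T.image q, (C * Z ^ 2) * f x ^ 2 := by
          apply Finset.sum_le_sum
          intro x _
          have := hC (2 ^ a) (2 ^ b) (2 ^ d) x m (T.filter (fun t => q t = x))
            Nat.one_le_two_pow Nat.one_le_two_pow Nat.one_le_two_pow (by
              intro t ht
              obtain ⟨h1, rfl⟩ := Finset.mem_filter.1 ht
              exact good t (hTP t h1))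
          push_cast at this
          rw [← hZ] at this
          gcongr
      _ = C * Z ^ 2 * ∑ x ∈ T.image q, f x ^ 2 := by rw [Finset.mul_sum]
      _ ≤ _ := by
          gcongr
          exact hf.sum_le_tsum _ (fun x _ => sq_nonneg _)
  apply Real.sqrt_le_iff.2
  refine ⟨by positivity, main.trans ?_⟩
  rw [mul_pow, Real.sq_sqrt hF0, mul_pow]
  gcongr
  nlinarith
end

section
/- For every ε > 0 there exists C_ε > 0 such that, uniformly in dyadic N, N₁, N₂, N₃ ≥ 1 and m ∈ ℤ, the operator norm of the base tensor h^{𝐍,(m)} viewed as a linear map from ℓ²((ℤ²)²) (variables (n₁, n₃)) to ℓ²((ℤ²)²) (variables (n, n₂)), i.e. the map sending f to (n, n₂) ↦ ∑_{n₁,n₃} h^{𝐍,(m)}(n, n₁, n₂, n₃) f(n₁, n₃), is at most C_ε · (min(N, N₂))^ε · (min(N₁, N₃))^ε. -/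
lemma ms_bound {α : Type*} [DecidableEq α] (w : α → ℝ) (hfin : ∀ B : ℝ, {a | w a ≤ B}.Finite)
    (ε : ℝ) (hε : 0 < ε) :
    ∃ C : ℝ, 1 ≤ C ∧ ∀ s : Multiset α, (∀ a ∈ s, 2 ≤ w a) →
      (∏ i ∈ s.toFinset, ((s.count i : ℝ) + 1)) ≤ C * (s.map w).prod ^ ε := by
  set F := (hfin ((2 : ℝ) ^ (1 / ε))).toFinset with hF
  have hl : 0 < Real.log 2 := Real.log_pos (by norm_num)
  set c : ℝ := 1 + 1 / (ε * Real.log 2) with hc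
  have hc1 : 1 ≤ c := by
    have : 0 < 1 / (ε * Real.log 2) := by positivity
    linarith
  refine ⟨c ^ F.card, one_le_pow₀ hc1, fun s hs => ?_⟩
  rw [Finset.prod_multiset_map_count, ← Real.finsetProd_rpow]
  · have h1 : ∀ i ∈ s.toFinset, ((s.count i : ℝ) + 1) ≤
        (if i ∈ F then c else 1) * (w i ^ s.count i) ^ ε := by
      intro i hi
      have hwi : 2 ≤ w i := hs i (Multiset.mem_toFinset.1 hi)
      have hsw : (w i ^ s.count i) ^ ε = (w i ^ ε) ^ s.count i := by
        rw [← Real.rpow_natCast, ← Real.rpow_natCast, ← Real.rpow_mul (by linarith),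
          ← Real.rpow_mul (by linarith), mul_comm]
      set k := s.count i
      split_ifs with hiF
      · have h2 : ((2 : ℝ) ^ k) ^ ε ≤ (w i ^ k) ^ ε := by gcongr
        have h3 : 1 + (k : ℝ) * (ε * Real.log 2) ≤ ((2 : ℝ) ^ k) ^ ε := by
          rw [Real.rpow_def_of_pos (by positivity), Real.log_pow]
          have := Real.add_one_le_exp ((k : ℝ) * Real.log 2 * ε)
          linarith
        have h4 : (k : ℝ) + 1 ≤ c * (1 + (k : ℝ) * (ε * Real.log 2)) := by
          have hp : 0 < ε * Real.log 2 := by positivity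
          rw [hc]
          have : (1 + 1 / (ε * Real.log 2)) * (1 + (k : ℝ) * (ε * Real.log 2)) =
            1 + k + (k : ℝ) * (ε * Real.log 2) + 1 / (ε * Real.log 2) := by
            field_simp
            ring
          rw [this]
          have : 0 ≤ (k : ℝ) * (ε * Real.log 2) := by positivity
          have : 0 ≤ 1 / (ε * Real.log 2) := by positivity
          linarith
        calc (k : ℝ) + 1 ≤ c * (1 + (k : ℝ) * (ε * Real.log 2)) := h4
          _ ≤ _ := by
            apply mul_le_mul_of_nonneg_left (h3.trans h2) (by linarith)
      · have hB : (2 : ℝ) ^ (1 / ε) < w i := by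
          simpa [hF] using hiF
        have h2 : 2 ≤ w i ^ ε := by
          have : ((2 : ℝ) ^ (1 / ε)) ^ ε ≤ w i ^ ε := by gcongr
          rw [← Real.rpow_mul (by norm_num)] at this
          rwa [one_div_mul_cancel hε.ne', Real.rpow_one] at this
        rw [hsw, one_mul]
        have h3 : (2 : ℝ) ^ k ≤ (w i ^ ε) ^ k := by gcongr
        have h4 : (k : ℝ) + 1 ≤ 2 ^ k := by
          have : k + 1 ≤ 2 ^ k := Nat.lt_two_pow_self
          exact_mod_cast this
        linarith
    calc _ ≤ ∏ i ∈ s.toFinset, ((if i ∈ F then c else 1) * (w i ^ s.count i) ^ ε) :=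
          Finset.prod_le_prod (fun i _ => by positivity) h1
      _ = (∏ i ∈ s.toFinset, (if i ∈ F then c else 1)) *
            ∏ i ∈ s.toFinset, (w i ^ s.count i) ^ ε := Finset.prod_mul_distrib
      _ ≤ _ := by
        gcongr
        · apply Finset.prod_nonneg
          intro i hi
          have := hs i (Multiset.mem_toFinset.1 hi)
          positivity
        · rw [Finset.prod_ite_mem, Finset.prod_const]
          exact pow_le_pow_right₀ hc1 (Finset.card_le_card Finset.inter_subset_right)
  · intro i hi
    have := hs i (Multiset.mem_toFinset.1 hi)
    positivity

lemma gauss_fin (B : ℝ) : {z : GaussianInt | (z.norm : ℝ) ≤ B}.Finite := by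
  have : Set.Finite (Set.Icc (-⌊B⌋) ⌊B⌋ ×ˢ Set.Icc (-⌊B⌋) ⌊B⌋ : Set (ℤ × ℤ)) :=
    (Set.finite_Icc _ _).prod (Set.finite_Icc _ _)
  refine (this.image (fun p => (⟨p.1, p.2⟩ : GaussianInt))).subset ?_
  intro z hz
  have hz : z.norm ≤ ⌊B⌋ := Int.le_floor.2 hz
  rw [Zsqrtd.norm_def] at hz
  refine ⟨(z.re, z.im), ⟨⟨?_, ?_⟩, ⟨?_, ?_⟩⟩, rfl⟩ <;> simp only <;> 
    nlinarith [Int.le_self_sq z.re, Int.le_self_sq z.im, Int.le_self_sq (-z.re), Int.le_self_sq (-z.im), sq_nonneg z.re, sq_nonneg z.im]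

open Classical in
lemma gauss_count (ε : ℝ) (hε : 0 < ε) :
    ∃ C : ℝ, 1 ≤ C ∧ ∀ X : ℝ, 1 ≤ X → ∀ r : ℤ, (r : ℝ) ≤ X → ∀ S : Finset GaussianInt,
      (∀ z ∈ S, z.norm = r) → (S.card : ℝ) ≤ C * X ^ ε := by
  let _ : StrongNormalizationMonoid GaussianInt :=
    UniqueFactorizationMonoid.strongNormalizationMonoid
  obtain ⟨C, hC, h⟩ := ms_bound (fun z : GaussianInt => (z.norm : ℝ)) gauss_fin (ε / 2) (by positivity)
  set U := (gauss_fin 1).toFinset with hU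
  have hU1 : 1 ≤ U.card := by
    apply Finset.card_pos.2
    exact ⟨0, by simp [hU, Zsqrtd.norm]⟩
  refine ⟨U.card * C, by
    have : (1 : ℝ) ≤ U.card := by exact_mod_cast hU1
    nlinarith, fun X hX r hr S hS => ?_⟩
  have hXε : 1 ≤ X ^ ε := Real.one_le_rpow hX hε.le
  rcases lt_or_ge 0 r with hr0 | hr0
  · set R : GaussianInt := (r : GaussianInt) with hR
    have hRn : R.norm = r * r := by simp [hR, Zsqrtd.norm_intCast]
    have hR0 : R ≠ 0 := by
      rw [← GaussianInt.norm_pos, hRn]; positivity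
    have hS0 : ∀ z ∈ S, z ≠ 0 := by
      intro z hz
      rw [← GaussianInt.norm_pos, hS z hz]; exact hr0
    set T := UniqueFactorizationMonoid.normalizedFactors R with hT
    have hmap : ∀ z ∈ S, UniqueFactorizationMonoid.normalizedFactors z ∈ Finset.Iic T := by
      intro z hz
      rw [Finset.mem_Iic,
        ← UniqueFactorizationMonoid.dvd_iff_normalizedFactors_le_normalizedFactors (hS0 z hz) hR0]
      refine ⟨star z, ?_⟩
      rw [← Zsqrtd.norm_eq_mul_conj, hS z hz]
    have hcard : S.card ≤ U.card * (Finset.Iic T).card := by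
      apply Finset.card_le_mul_card_image_of_maps_to hmap
      intro b hb
      rcases Finset.eq_empty_or_nonempty
        {a ∈ S | UniqueFactorizationMonoid.normalizedFactors a = b} with he | ⟨z0, hz0⟩
      · rw [he]; simp
      · rw [Finset.mem_filter] at hz0
        have : {a ∈ S | UniqueFactorizationMonoid.normalizedFactors a = b} ⊆
            U.image (fun u => z0 * u) := by
          intro z hz
          rw [Finset.mem_filter] at hz
          have := (UniqueFactorizationMonoid.associated_iff_normalizedFactors_eq_normalizedFactors
            (hS0 z0 hz0.1) (hS0 z hz.1)).2 (hz0.2.trans hz.2.symm)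
          obtain ⟨u, hu⟩ := this
          refine Finset.mem_image.2 ⟨u, ?_, hu⟩
          have := (Zsqrtd.norm_eq_one_iff' (by norm_num) (u : GaussianInt)).2 u.isUnit
          rw [hU, Set.Finite.mem_toFinset, Set.mem_setOf_eq, this]; norm_num
        exact (Finset.card_le_card this).trans Finset.card_image_le
    have hT2 : ∀ a ∈ T, (2 : ℝ) ≤ (a.norm : ℝ) := by
      intro a ha
      have hp := UniqueFactorizationMonoid.prime_of_normalized_factor a ha
      have h1 := GaussianInt.norm_pos.2 hp.ne_zero
      have h2 : a.norm ≠ 1 := fun h => hp.not_isUnit ((Zsqrtd.norm_eq_one_iff' (by norm_num) a).1 h)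
      have : 2 ≤ a.norm := by omega
      exact_mod_cast this
    have hprod : (T.map (fun z : GaussianInt => (z.norm : ℝ))).prod = (r : ℝ) * r := by
      have h1 : (T.map (fun z : GaussianInt => (z.norm : ℝ))).prod = (T.prod.norm : ℝ) := by
        have := Multiset.prod_hom T ((Int.castRingHom ℝ).toMonoidHom.comp (Zsqrtd.normMonoidHom (d := -1)))
        exact this
      have h2 := UniqueFactorizationMonoid.prod_normalizedFactors hR0
      rw [h1, Zsqrtd.norm_eq_of_associated (by norm_num) h2, hRn]
      push_cast; rfl
    have hb := h T hT2
    rw [hprod] at hb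
    have hIic : ((Finset.Iic T).card : ℝ) = ∏ i ∈ T.toFinset, ((T.count i : ℝ) + 1) := by
      rw [Multiset.card_Iic]; push_cast; rfl
    have hrr : ((r : ℝ) * r) ^ (ε / 2) ≤ X ^ ε := by
      have hr0' : (0 : ℝ) < r := by exact_mod_cast hr0
      rw [← sq, ← Real.rpow_natCast, ← Real.rpow_mul hr0'.le]
      have : ((2 : ℕ) : ℝ) * (ε / 2) = ε := by push_cast; ring
      rw [this]
      gcongr
    calc (S.card : ℝ) ≤ U.card * ((Finset.Iic T).card : ℝ) := by exact_mod_cast hcard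
      _ ≤ U.card * (C * X ^ ε) := by
        rw [hIic]
        gcongr
        exact hb.trans (by gcongr)
      _ = _ := by ring
  · have : S ⊆ U := by
      intro z hz
      have : z.norm ≤ 1 := by rw [hS z hz]; omega
      have : (z.norm : ℝ) ≤ 1 := by exact_mod_cast this
      simpa [hU] using this
    have : (S.card : ℝ) ≤ U.card := by exact_mod_cast Finset.card_le_card this
    have h2 : (1 : ℝ) ≤ U.card := by exact_mod_cast hU1
    have : 1 ≤ C * X ^ ε := by nlinarith
    nlinarith

lemma circle_count (ε : ℝ) (hε : 0 < ε) :
    ∃ C : ℝ, 1 ≤ C ∧ ∀ M : ℝ, 1 ≤ M → ∀ (s : ℤ × ℤ) (K : ℤ) (S : Finset (ℤ × ℤ)),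
      (∀ a ∈ S, (nsq a : ℝ) ≤ M ^ 2 ∧ nsq a + nsq (s - a) = K) → (S.card : ℝ) ≤ C * M ^ ε := by
  classical
  obtain ⟨C, hC, h⟩ := gauss_count (ε / 6) (by positivity)
  have h64 : (1 : ℝ) ≤ 64 ^ (ε / 6) := Real.one_le_rpow (by norm_num) (by positivity)
  refine ⟨2 * (C * 64 ^ (ε / 6)), by nlinarith, fun M hM s K S hS => ?_⟩
  have hMε : 1 ≤ M ^ ε := Real.one_le_rpow hM hε.le
  have hCC : 1 ≤ C * 64 ^ (ε / 6) := by nlinarith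
  set r : ℤ := 2 * K - nsq s with hr
  rcases le_or_gt (r : ℝ) (64 * M ^ 6) with hle | hgt
  · have h1 := h (64 * M ^ 6) (by nlinarith [one_le_pow₀ (n := 6) hM]) r hle
      (S.image (fun a => (⟨2 * a.1 - s.1, 2 * a.2 - s.2⟩ : GaussianInt))) (by
        intro z hz
        obtain ⟨a, ha, rfl⟩ := Finset.mem_image.1 hz
        have := (hS a ha).2
        simp only [nsq, Prod.fst_sub, Prod.snd_sub, Zsqrtd.norm_def, hr] at this ⊢
        linarith)
    rw [Finset.card_image_of_injective] at h1
    · have : (64 * M ^ 6) ^ (ε / 6) = 64 ^ (ε / 6) * M ^ ε := by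
        rw [Real.mul_rpow (by norm_num) (by positivity), ← Real.rpow_natCast M,
          ← Real.rpow_mul (by linarith)]
        congr 2; push_cast; ring
      rw [this] at h1
      nlinarith
    · intro a b hab
      simp only [Zsqrtd.mk.injEq] at hab
      ext <;> omega
  · have : S.card ≤ 2 := by
      by_contra! hcon
      obtain ⟨a, ha, b, hb, c, hc, hab, hac, hbc⟩ := Finset.two_lt_card.1 hcon
      have key : ∀ x ∈ S, ∀ y ∈ S, x ≠ y → 0 < nsq (x - y) ∧ (nsq (x - y) : ℝ) ≤ 4 * M ^ 2 := by
        intro x hx y hy hxy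
        constructor
        · by_contra! hn
          apply hxy
          simp only [nsq, Prod.fst_sub, Prod.snd_sub] at hn
          have h1 : x.1 - y.1 = 0 := by nlinarith [sq_nonneg (x.1 - y.1), sq_nonneg (x.2 - y.2)]
          have h2 : x.2 - y.2 = 0 := by nlinarith [sq_nonneg (x.1 - y.1), sq_nonneg (x.2 - y.2)]
          ext <;> omega
        · have h1 := (hS x hx).1
          have h2 := (hS y hy).1
          simp only [nsq, Prod.fst_sub, Prod.snd_sub] at h1 h2 ⊢
          push_cast at h1 h2 ⊢
          nlinarith [sq_nonneg ((x.1 : ℝ) + y.1), sq_nonneg ((x.2 : ℝ) + y.2)]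
      obtain ⟨p1, q1⟩ := key a ha b hb hab
      obtain ⟨p2, q2⟩ := key a ha c hc hac
      obtain ⟨p3, q3⟩ := key b hb c hc hbc
      set D : ℤ := (b.1 - a.1) * (c.2 - a.2) - (b.2 - a.2) * (c.1 - a.1) with hD
      have hid : D ^ 2 * r = nsq (a - b) * nsq (a - c) * nsq (b - c) := by
        have ea := (hS a ha).2
        have eb := (hS b hb).2
        have ec := (hS c hc).2
        simp only [nsq, Prod.fst_sub, Prod.snd_sub, hr, hD] at ea eb ec ⊢
        obtain ⟨a1, a2⟩ := a
        obtain ⟨b1, b2⟩ := b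
        obtain ⟨c1, c2⟩ := c
        obtain ⟨s1, s2⟩ := s
        simp only at ea eb ec ⊢
        obtain ⟨u1, rfl⟩ : ∃ u, b1 = a1 + u := ⟨b1 - a1, by ring⟩
        obtain ⟨u2, rfl⟩ : ∃ u, b2 = a2 + u := ⟨b2 - a2, by ring⟩
        obtain ⟨v1, rfl⟩ : ∃ u, c1 = a1 + u := ⟨c1 - a1, by ring⟩
        obtain ⟨v2, rfl⟩ : ∃ u, c2 = a2 + u := ⟨c2 - a2, by ring⟩
        obtain ⟨w1, rfl⟩ : ∃ u, s1 = 2 * a1 - u := ⟨2 * a1 - s1, by ring⟩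
        obtain ⟨w2, rfl⟩ : ∃ u, s2 = 2 * a2 - u := ⟨2 * a2 - s2, by ring⟩
        have hu : w1 * u1 + w2 * u2 = - (u1 ^ 2 + u2 ^ 2) := by linarith
        have hv : w1 * v1 + w2 * v2 = - (v1 ^ 2 + v2 ^ 2) := by linarith
        have hK : 2 * K - ((2 * a1 - w1) ^ 2 + (2 * a2 - w2) ^ 2) = w1 ^ 2 + w2 ^ 2 := by linarith
        rw [hK]
        have e1 : (u1 * v2 - u2 * v1) ^ 2 * (w1 ^ 2 + w2 ^ 2) =
          ((w1 * u1 + w2 * u2) * v1 - (w1 * v1 + w2 * v2) * u1) ^ 2 +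
          ((w1 * u1 + w2 * u2) * v2 - (w1 * v1 + w2 * v2) * u2) ^ 2 := by ring
        rw [hu, hv] at e1
        have e2 : a1 + u1 - a1 = u1 := by ring
        ring_nf at e1 ⊢
        linarith
      have hpos : 0 < D ^ 2 * r := by rw [hid]; positivity
      have hD0 : D ^ 2 ≠ 0 := by rintro h0; rw [h0] at hpos; simp at hpos
      have hD1 : 1 ≤ D ^ 2 := by have := sq_nonneg D; omega
      have hr0 : 0 < r := by
        by_contra! hn; nlinarith
      have hrle : r ≤ nsq (a - b) * nsq (a - c) * nsq (b - c) := by rw [← hid]; nlinarith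
      have hrle' : (r : ℝ) ≤ nsq (a - b) * nsq (a - c) * nsq (b - c) := by exact_mod_cast hrle
      have p1' : (0 : ℝ) < nsq (a - b) := by exact_mod_cast p1
      have p2' : (0 : ℝ) < nsq (a - c) := by exact_mod_cast p2
      have p3' : (0 : ℝ) < nsq (b - c) := by exact_mod_cast p3
      have : (nsq (a - b) * nsq (a - c) * nsq (b - c) : ℝ) ≤ (4 * M ^ 2) * (4 * M ^ 2) * (4 * M ^ 2) := by
        gcongr
      nlinarith
    have : (S.card : ℝ) ≤ 2 := by exact_mod_cast this
    nlinarith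

lemma schur {ι κ : Type*} (S : Finset ι) (T : Finset κ) (h : ι → κ → ℝ) (h0 : ∀ p q, h p q = 0 ∨ h p q = 1)
    (hs : ∀ p q, h p q ≠ 0 → p ∈ S ∧ q ∈ T) (A B : ℝ) (hA0 : 0 ≤ A)
    (hA : ∀ p, ∑ q ∈ T, h p q ≤ A) (hB : ∀ q, ∑ p ∈ S, h p q ≤ B)
    (f : κ → ℝ) (hf : Summable (fun q => f q ^ 2)) (hB0 : 0 ≤ B) :
    ∑' p, (∑' q, h p q * f q) ^ 2 ≤ A * B * ∑' q, f q ^ 2 := by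
  have h1 : ∀ p, ∑' q, h p q * f q = ∑ q ∈ T, h p q * f q := by
    intro p
    apply tsum_eq_sum
    intro q hq
    have : h p q = 0 := by
      by_contra hn; exact hq (hs p q hn).2
    rw [this, zero_mul]
  simp_rw [h1]
  rw [tsum_eq_sum (s := S)]
  · have hnn : ∀ p q, 0 ≤ h p q := fun p q => by rcases h0 p q with e | e <;> rw [e]; norm_num
    have hsq : ∀ p q, h p q ^ 2 = h p q := fun p q => by rcases h0 p q with e | e <;> rw [e] <;> norm_num
    have h2 : ∀ p, (∑ q ∈ T, h p q * f q) ^ 2 ≤ A * ∑ q ∈ T, h p q * f q ^ 2 := by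
      intro p
      have := Finset.sum_mul_sq_le_sq_mul_sq T (fun q => h p q) (fun q => h p q * f q)
      have e : ∀ q, h p q * (h p q * f q) = h p q * f q := fun q => by
        rw [← mul_assoc, ← sq, hsq]
      simp only [e, mul_pow, hsq] at this
      refine this.trans ?_
      gcongr
      · exact Finset.sum_nonneg fun q _ => mul_nonneg (hnn p q) (sq_nonneg _)
      · exact hA p
    calc _ ≤ ∑ p ∈ S, A * ∑ q ∈ T, h p q * f q ^ 2 := Finset.sum_le_sum fun p _ => h2 p
      _ = A * ∑ q ∈ T, (∑ p ∈ S, h p q) * f q ^ 2 := by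
        rw [← Finset.mul_sum, Finset.sum_comm]
        simp_rw [Finset.sum_mul]
      _ ≤ A * ∑ q ∈ T, B * f q ^ 2 := by
        gcongr with q hq
        exact hB q
      _ = A * B * ∑ q ∈ T, f q ^ 2 := by rw [← Finset.mul_sum, mul_assoc]
      _ ≤ _ := by
        gcongr
        exact hf.sum_le_tsum T (fun _ _ => sq_nonneg _)
  · intro p hp
    have : ∀ q, h p q = 0 := fun q => by
      by_contra hn; exact hp (hs p q hn).1
    simp [this]

lemma pair_count (ε : ℝ) (hε : 0 < ε) :
    ∃ C : ℝ, 1 ≤ C ∧ ∀ M₁ M₂ : ℝ, 1 ≤ M₁ → 1 ≤ M₂ → ∀ (s : ℤ × ℤ) (K : ℤ)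
      (S : Finset ((ℤ × ℤ) × (ℤ × ℤ))),
      (∀ q ∈ S, (nsq q.1 : ℝ) ≤ M₁ ^ 2 ∧ (nsq q.2 : ℝ) ≤ M₂ ^ 2 ∧ q.1 + q.2 = s ∧
        nsq q.1 + nsq q.2 = K) → (S.card : ℝ) ≤ C * (min M₁ M₂) ^ ε := by
  classical
  obtain ⟨C, hC, h⟩ := circle_count ε hε
  refine ⟨C, hC, fun M₁ M₂ h1 h2 s K S hS => ?_⟩
  rcases le_total M₁ M₂ with hle | hle
  · rw [min_eq_left hle]
    have := h M₁ h1 s K (S.image Prod.fst) (by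
      intro a ha
      obtain ⟨q, hq, rfl⟩ := Finset.mem_image.1 ha
      obtain ⟨e1, e2, e3, e4⟩ := hS q hq
      refine ⟨e1, ?_⟩
      rw [← e3, add_sub_cancel_left, e4])
    rwa [Finset.card_image_of_injOn] at this
    intro q hq q' hq' he
    have e := (hS q hq).2.2.1
    have e' := (hS q' hq').2.2.1
    refine Prod.ext he ?_
    rw [← e', he] at e
    exact add_left_cancel e
  · rw [min_eq_right hle]
    have := h M₂ h2 s K (S.image Prod.snd) (by
      intro a ha
      obtain ⟨q, hq, rfl⟩ := Finset.mem_image.1 ha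
      obtain ⟨e1, e2, e3, e4⟩ := hS q hq
      refine ⟨e2, ?_⟩
      rw [← e3, add_sub_cancel_right, ← e4, add_comm])
    rwa [Finset.card_image_of_injOn] at this
    intro q hq q' hq' he
    have e := (hS q hq).2.2.1
    have e' := (hS q' hq').2.2.1
    refine Prod.ext ?_ he
    rw [← e', he] at e
    exact add_right_cancel e

lemma nsq_le_of_sim {N : ℝ} {n : ℤ × ℤ} (h : simDyadic N n) : (nsq n : ℝ) ≤ N ^ 2 := by
  have h1 : znorm n ≤ N := by
    rcases h with ⟨rfl, h⟩ | ⟨_, _, h⟩ <;> exact h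
  have h2 : (nsq n : ℝ) = znorm n ^ 2 := by
    rw [znorm, Real.sq_sqrt (by positivity), nsq]; push_cast; rfl
  have h0 : 0 ≤ znorm n := Real.sqrt_nonneg _
  rw [h2]; gcongr

lemma nsq_fin (B : ℝ) : {a : ℤ × ℤ | (nsq a : ℝ) ≤ B}.Finite := by
  refine ((gauss_fin B).image (fun z => (z.re, z.im))).subset ?_
  intro a ha
  refine ⟨⟨a.1, a.2⟩, ?_, rfl⟩
  have : Zsqrtd.norm (⟨a.1, a.2⟩ : GaussianInt) = nsq a := by
    rw [Zsqrtd.norm_def, nsq]; ring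
  simp only [Set.mem_setOf_eq] at ha ⊢
  rw [this]; exact ha

lemma dyadic_one_le {N : ℝ} (h : IsDyadic N) : 1 ≤ N := by
  obtain ⟨k, rfl⟩ := h
  exact one_le_pow₀ (by norm_num)

theorem stmt16 (ε : ℝ) (hε : 0 < ε) :
    ∃ C : ℝ, 0 < C ∧ ∀ N N₁ N₂ N₃ : ℝ,
      IsDyadic N → IsDyadic N₁ → IsDyadic N₂ → IsDyadic N₃ → ∀ m : ℤ,
      ∀ f : (ℤ × ℤ) × (ℤ × ℤ) → ℝ, Summable (fun q => f q ^ 2) →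
        Real.sqrt (∑' p : (ℤ × ℤ) × (ℤ × ℤ),
            (∑' q : (ℤ × ℤ) × (ℤ × ℤ), hten N N₁ N₂ N₃ m p.1 q.1 p.2 q.2 * f q) ^ 2) ≤
          C * (min N N₂) ^ ε * (min N₁ N₃) ^ ε *
            Real.sqrt (∑' q : (ℤ × ℤ) × (ℤ × ℤ), f q ^ 2) := by
  classical
  obtain ⟨C, hC, h⟩ := pair_count ε hε
  refine ⟨C * C, by positivity, ?_⟩
  intro N N₁ N₂ N₃ dN dN₁ dN₂ dN₃ m f hf
  have hN := dyadic_one_le dN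
  have hN₁ := dyadic_one_le dN₁
  have hN₂ := dyadic_one_le dN₂
  have hN₃ := dyadic_one_le dN₃
  have hA1 : 1 ≤ C * (min N₁ N₃) ^ ε := by
    have := Real.one_le_rpow (le_min hN₁ hN₃) hε.le
    nlinarith
  have hB1 : 1 ≤ C * (min N N₂) ^ ε := by
    have := Real.one_le_rpow (le_min hN hN₂) hε.le
    nlinarith
  set A := C * (min N₁ N₃) ^ ε with hA
  set B := C * (min N N₂) ^ ε with hB
  have key := schur ((nsq_fin (N ^ 2)).toFinset ×ˢ (nsq_fin (N₂ ^ 2)).toFinset)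
    ((nsq_fin (N₁ ^ 2)).toFinset ×ˢ (nsq_fin (N₃ ^ 2)).toFinset)
    (fun p q => hten N N₁ N₂ N₃ m p.1 q.1 p.2 q.2)
    (by intro p q; simp only [hten]; split_ifs <;> simp)
    (by
      intro p q hpq
      have hS : SMem N N₁ N₂ N₃ m p.1 q.1 p.2 q.2 := by
        by_contra hn; simp [hten, hn] at hpq
      obtain ⟨-, -, -, -, e, e1, e2, e3⟩ := hS
      simp only [Finset.mem_product, Set.Finite.mem_toFinset, Set.mem_setOf_eq]
      exact ⟨⟨nsq_le_of_sim e, nsq_le_of_sim e2⟩, ⟨nsq_le_of_sim e1, nsq_le_of_sim e3⟩⟩)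
    A B (by linarith)
    (by
      intro p
      simp only [hten]
      rw [Finset.sum_boole]
      apply h N₁ N₃ hN₁ hN₃ (p.1 + p.2) (nsq p.1 + nsq p.2 - m)
      intro q hq
      obtain ⟨e0, -, -, em, e, e1, e2, e3⟩ := (Finset.mem_filter.1 hq).2
      refine ⟨nsq_le_of_sim e1, nsq_le_of_sim e3, ?_, ?_⟩
      · rw [e0]; abel
      · rw [← em, phiFn]; ring)
    (by
      intro q
      simp only [hten]
      rw [Finset.sum_boole]
      apply h N N₂ hN hN₂ (q.1 + q.2) (nsq q.1 + nsq q.2 + m)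
      intro p hp
      obtain ⟨e0, -, -, em, e, e1, e2, e3⟩ := (Finset.mem_filter.1 hp).2
      refine ⟨nsq_le_of_sim e, nsq_le_of_sim e2, ?_, ?_⟩
      · rw [e0]; abel
      · rw [← em, phiFn]; ring)
    f hf (by linarith)
  have hfin : C * C * (min N N₂) ^ ε * (min N₁ N₃) ^ ε = A * B := by rw [hA, hB]; ring
  rw [hfin]
  have hF : 0 ≤ ∑' q : (ℤ × ℤ) × (ℤ × ℤ), f q ^ 2 := tsum_nonneg fun q => sq_nonneg _
  have hAB : 1 ≤ A * B := by nlinarith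
  refine Real.sqrt_le_iff.2 ⟨by positivity, key.trans ?_⟩
  rw [mul_pow, Real.sq_sqrt hF]
  gcongr
  nlinarith
end
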